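/- arXiv:1811.10967 — 2 statements merged into one kernel-verified Lean document; each statement's English description precedes it below -/
import Mathlib

section
/- Let m ≥ 2 and let λ be a partition of (m−1)m/2 with λ ⊴ ρ_{m−1}. Then the partition (m, λ_1, λ_2, …) obtained by prepending a part m to λ, and the partition (λ_1, …, λ_{ℓ(λ)}, 1, 1, …, 1) obtained by appending m parts equal to 1 to λ, are both partitions of m(m+1)/2 that are dominated by ρ_m. Moreover, for λ ≠ μ in Λ(ρ_{m−1}), the four partitions (m,λ), (λ,1^m), (m,μ), (μ,1^m) are pairwise distinct. -/
/-!
Write `n = (m-1)m/2`, so that `m(m+1)/2 = n + m`. Prepending `m` to `λ` and to `ρ_{m-1}` shifts all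
partial sums in the same way, and `(m, ρ_{m-1}) = ρ_m`, so `(m, λ) ⊴ ρ_m`.

For `(λ, 1^m)` the partial sums up to `ℓ(λ)` are those of `λ`, hence bounded by those of `ρ_{m-1}`
and a fortiori of `ρ_m`. Dominance `λ ⊴ ρ_{m-1}` forces `ℓ(λ) ≥ m - 1` (`le_plength`), because the
partial sums of `ρ_{m-1}` reach `n` only after `m - 1` terms; so beyond `ℓ(λ)` the partial sums
of `ρ_m` already equal the total `n + m`.

Both constructions are injective, and they never agree: the first part of `(m, λ)` is `m`, while that
of `(μ, 1^m)` is `μ_1 ≤ m - 1`.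
-/

/-- `f` represents a partition of `n`: a weakly decreasing sequence (0-indexed,
padded with zeros) whose parts sum to `n`. Any partition of `n` has at most `n`
nonzero parts, so we may demand `f i = 0` for `i ≥ n`. -/
def IsPartitionOf (n : ℕ) (f : ℕ → ℕ) : Prop :=
  (∀ i j, i ≤ j → f j ≤ f i) ∧ (∀ i, n ≤ i → f i = 0) ∧ ∑ i ∈ Finset.range n, f i = n

/-- `DominatedBy f g` means `f ⊴ g` in dominance order: every partial sum of `f`
is at most the corresponding partial sum of `g`. -/
def DominatedBy (f g : ℕ → ℕ) : Prop :=
  ∀ k, ∑ i ∈ Finset.range k, f i ≤ ∑ i ∈ Finset.range k, g i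

/-- The conjugate (transpose) partition: its `i`-th part (0-indexed) is the number
of parts of `f` that are `> i`. -/
noncomputable def conjugate (f : ℕ → ℕ) : ℕ → ℕ := fun i => Set.ncard {j | i < f j}

/-- The staircase partition `ρ_m = (m, m-1, …, 2, 1)` (0-indexed). -/
def staircase (m : ℕ) : ℕ → ℕ := fun i => m - i

/-- The number of nonzero parts of a partition. -/
noncomputable def plength (f : ℕ → ℕ) : ℕ := Set.ncard {i | 0 < f i}

/-- Prepend a part `a` in front of the partition `f`. -/
def prependPart (a : ℕ) (f : ℕ → ℕ) : ℕ → ℕ := fun i => if i = 0 then a else f (i - 1)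

/-- Append `a` parts equal to `1` after the last nonzero part of `f`. -/
noncomputable def appendOnes (a : ℕ) (f : ℕ → ℕ) : ℕ → ℕ :=
  fun i => if i < plength f then f i else if i < plength f + a then 1 else 0

theorem two_mul_sum_staircase (m k : ℕ) :
    2 * ∑ i ∈ Finset.range k, staircase m i + (m - k) * (m - k + 1) = m * (m + 1) := by
  induction k with
  | zero => simp
  | succ k ih =>
    rw [Finset.sum_range_succ, ← ih]
    simp only [staircase]
    rcases Nat.lt_or_ge k m with h | h
    · obtain ⟨d, rfl⟩ : ∃ d, m = k + 1 + d := ⟨m - (k + 1), by omega⟩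
      have h1 : k + 1 + d - k = d + 1 := by omega
      have h2 : k + 1 + d - (k + 1) = d := by omega
      rw [h1, h2]
      ring
    · have h1 : m - k = 0 := by omega
      have h2 : m - (k + 1) = 0 := by omega
      rw [h1, h2]
      ring

theorem triangle_succ (m : ℕ) (hm : 1 ≤ m) : m * (m + 1) / 2 = (m - 1) * m / 2 + m := by
  obtain ⟨d, rfl⟩ : ∃ d, m = d + 1 := ⟨m - 1, by omega⟩
  have h : (d + 1) * (d + 1 + 1) = (d + 1 - 1) * (d + 1) + (d + 1) * 2 := by
    rw [Nat.add_sub_cancel]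
    ring
  rw [h, Nat.add_mul_div_right _ _ (by norm_num)]

theorem sum_eq_of_zero_of_le {n k : ℕ} {f : ℕ → ℕ} (h : ∀ i, n ≤ i → f i = 0) (hk : n ≤ k) :
    ∑ i ∈ Finset.range k, f i = ∑ i ∈ Finset.range n, f i := by
  symm
  apply Finset.sum_subset (Finset.range_mono hk)
  intro i _ hi
  exact h i (by simpa using hi)

theorem pos_iff_lt_plength {n : ℕ} {f : ℕ → ℕ} (hf : IsPartitionOf n f) (i : ℕ) :
    0 < f i ↔ i < plength f := by
  classical
  have hex : ∃ p, f p = 0 := ⟨n, hf.2.1 n le_rfl⟩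
  have key : ∀ i, 0 < f i ↔ i < Nat.find hex := by
    intro i
    constructor
    · intro hi
      by_contra hc
      have h1 := hf.1 _ _ (not_lt.mp hc)
      have h2 := Nat.find_spec hex
      omega
    · intro hi
      exact Nat.pos_of_ne_zero (Nat.find_min hex hi)
  have hset : {i | 0 < f i} = ((Finset.range (Nat.find hex) : Finset ℕ) : Set ℕ) := by
    ext i
    simp [key i]
  have hp : plength f = Nat.find hex := by
    rw [plength, hset, Set.ncard_coe_finset, Finset.card_range]
  rw [hp, key]

theorem eq_zero_of_plength_le {n : ℕ} {f : ℕ → ℕ} (hf : IsPartitionOf n f) (i : ℕ)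
    (hi : plength f ≤ i) : f i = 0 := by
  have := pos_iff_lt_plength hf i
  omega

theorem plength_le {n : ℕ} {f : ℕ → ℕ} (hf : IsPartitionOf n f) : plength f ≤ n := by
  have h1 := pos_iff_lt_plength hf n
  have h2 := hf.2.1 n le_rfl
  omega

theorem sum_plength {n : ℕ} {f : ℕ → ℕ} (hf : IsPartitionOf n f) :
    ∑ i ∈ Finset.range (plength f), f i = n := by
  rw [← sum_eq_of_zero_of_le (eq_zero_of_plength_le hf) (plength_le hf), hf.2.2]

/-- A partition dominated by `ρ_m` has at least `m` parts: its first `ℓ` parts already sum to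
`m(m+1)/2`, whereas fewer than `m` parts of `ρ_m` sum to strictly less. -/
theorem le_plength {m : ℕ} {f : ℕ → ℕ} (hf : IsPartitionOf (m * (m + 1) / 2) f)
    (hd : DominatedBy f (staircase m)) : m ≤ plength f := by
  by_contra hc
  have h1 := hd (plength f)
  rw [sum_plength hf] at h1
  have h2 := two_mul_sum_staircase m (plength f)
  have h3 : 1 * (1 + 1) ≤ (m - plength f) * (m - plength f + 1) :=
    Nat.mul_le_mul (by omega) (by omega)
  omega

theorem sum_prependPart (a k : ℕ) (f : ℕ → ℕ) :
    ∑ i ∈ Finset.range (k + 1), prependPart a f i = ∑ i ∈ Finset.range k, f i + a := by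
  rw [Finset.sum_range_succ']
  simp [prependPart]

theorem prependPart_staircase (m : ℕ) (hm : 1 ≤ m) :
    prependPart m (staircase (m - 1)) = staircase m := by
  funext i
  simp only [prependPart, staircase]
  split_ifs <;> omega

theorem sum_appendOnes {n : ℕ} {f : ℕ → ℕ} (hf : IsPartitionOf n f) (a k : ℕ) :
    ∑ i ∈ Finset.range k, appendOnes a f i
      = ∑ i ∈ Finset.range k, f i + min (k - plength f) a := by
  induction k with
  | zero => simp
  | succ k ih =>
    rw [Finset.sum_range_succ, Finset.sum_range_succ, ih]
    have h := eq_zero_of_plength_le hf k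
    simp only [appendOnes]
    split_ifs <;> omega

theorem prependPart_injective (a : ℕ) : Function.Injective (prependPart a) := by
  intro f g h
  funext i
  simpa [prependPart] using congrFun h (i + 1)

theorem appendOnes_eq_zero_iff {n : ℕ} {f : ℕ → ℕ} (hf : IsPartitionOf n f) (a i : ℕ) :
    appendOnes a f i = 0 ↔ plength f + a ≤ i := by
  have h := pos_iff_lt_plength hf i
  simp only [appendOnes]
  split_ifs <;> (try simp only [false_iff, true_iff]) <;> omega

theorem appendOnes_inj {n : ℕ} {f g : ℕ → ℕ} (hf : IsPartitionOf n f) (hg : IsPartitionOf n g)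
    (a : ℕ) (h : appendOnes a f = appendOnes a g) : f = g := by
  have hp : plength f = plength g := by
    have h1 := appendOnes_eq_zero_iff hf a (plength g + a)
    have h2 := appendOnes_eq_zero_iff hg a (plength f + a)
    have h3 := appendOnes_eq_zero_iff hf a (plength f + a)
    have h4 := appendOnes_eq_zero_iff hg a (plength g + a)
    rw [h] at h1 h3
    omega
  funext i
  have hi := congrFun h i
  have h1 := eq_zero_of_plength_le hf i
  have h2 := eq_zero_of_plength_le hg i
  simp only [appendOnes] at hi
  split_ifs at hi <;> omega

/-- The first parts differ: it is `m` on the left, and at most `max (m - 1) 1` on the right. -/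
theorem prependPart_ne_appendOnes {m : ℕ} (hm : 2 ≤ m) (f : ℕ → ℕ) {g : ℕ → ℕ}
    (hd : DominatedBy g (staircase (m - 1))) : prependPart m f ≠ appendOnes m g := by
  intro h
  have h0 := congrFun h 0
  have h1 := hd 1
  simp only [Finset.sum_range_one, staircase] at h1
  simp only [prependPart, appendOnes, if_true] at h0
  split_ifs at h0 <;> omega

theorem isPartitionOf_prependPart {n m : ℕ} {f : ℕ → ℕ} (hm : 1 ≤ m) (hf : IsPartitionOf n f)
    (h0 : f 0 ≤ m) : IsPartitionOf (n + m) (prependPart m f) := by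
  refine ⟨?_, ?_, ?_⟩
  · intro i j hij
    have h1 := hf.1 (i - 1) (j - 1) (by omega)
    have h2 := hf.1 0 (j - 1) (by omega)
    simp only [prependPart]
    split_ifs <;> omega
  · intro i hi
    have h1 := hf.2.1 (i - 1) (by omega)
    simp only [prependPart]
    split_ifs <;> omega
  · obtain ⟨d, rfl⟩ : ∃ d, m = d + 1 := ⟨m - 1, by omega⟩
    rw [← add_assoc, sum_prependPart, sum_eq_of_zero_of_le hf.2.1 (by omega), hf.2.2, add_assoc]

theorem isPartitionOf_appendOnes {n : ℕ} {f : ℕ → ℕ} (a : ℕ) (hf : IsPartitionOf n f) :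
    IsPartitionOf (n + a) (appendOnes a f) := by
  have hp := plength_le hf
  refine ⟨?_, ?_, ?_⟩
  · intro i j hij
    have h1 := hf.1 i j hij
    have h2 := pos_iff_lt_plength hf i
    simp only [appendOnes]
    split_ifs <;> omega
  · intro i hi
    rw [appendOnes_eq_zero_iff hf]
    omega
  · rw [sum_appendOnes hf, sum_eq_of_zero_of_le hf.2.1 (by omega), hf.2.2]
    omega

theorem dominatedBy_prependPart {m : ℕ} {f : ℕ → ℕ} (hm : 1 ≤ m)
    (hd : DominatedBy f (staircase (m - 1))) :
    DominatedBy (prependPart m f) (staircase m) := by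
  rintro (_ | k)
  · simp
  · rw [← prependPart_staircase m hm, sum_prependPart, sum_prependPart]
    exact Nat.add_le_add_right (hd k) m

theorem dominatedBy_appendOnes {m : ℕ} {f : ℕ → ℕ} (hm : 1 ≤ m)
    (hf : IsPartitionOf ((m - 1) * m / 2) f) (hd : DominatedBy f (staircase (m - 1))) :
    DominatedBy (appendOnes m f) (staircase m) := by
  intro k
  rw [sum_appendOnes hf]
  rcases Nat.lt_or_ge (plength f) k with hk | hk
  · have hp : m - 1 ≤ plength f := by
      apply le_plength _ hd
      rwa [Nat.sub_add_cancel hm]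
    have h1 := two_mul_sum_staircase m k
    have h2 : m - k = 0 := by omega
    rw [h2] at h1
    have h3 := triangle_succ m hm
    rw [sum_eq_of_zero_of_le (eq_zero_of_plength_le hf) hk.le, sum_plength hf]
    omega
  · have h1 : k - plength f = 0 := by omega
    rw [h1, Nat.zero_min, add_zero]
    refine (hd k).trans (Finset.sum_le_sum fun i _ => ?_)
    simp only [staircase]
    omega

/-- for `λ ⊴ ρ_{m-1}` a partition of `(m-1)m/2`, both `(m, λ)` and
`(λ, 1^m)` are partitions of `m(m+1)/2` dominated by `ρ_m`; moreover for `λ ≠ μ`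
the four resulting partitions are pairwise distinct. -/
theorem stmt1 (m : ℕ) (hm : 2 ≤ m) :
    (∀ f : ℕ → ℕ, IsPartitionOf ((m - 1) * m / 2) f → DominatedBy f (staircase (m - 1)) →
      (IsPartitionOf (m * (m + 1) / 2) (prependPart m f) ∧
        DominatedBy (prependPart m f) (staircase m)) ∧
      (IsPartitionOf (m * (m + 1) / 2) (appendOnes m f) ∧
        DominatedBy (appendOnes m f) (staircase m))) ∧
    (∀ f g : ℕ → ℕ, IsPartitionOf ((m - 1) * m / 2) f → DominatedBy f (staircase (m - 1)) →
      IsPartitionOf ((m - 1) * m / 2) g → DominatedBy g (staircase (m - 1)) → f ≠ g →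
      List.Pairwise (· ≠ ·)
        [prependPart m f, appendOnes m f, prependPart m g, appendOnes m g]) := by
  have hm1 : 1 ≤ m := by omega
  refine ⟨?_, ?_⟩
  · intro f hf hd
    have h0 : f 0 ≤ m := by
      have h1 := hd 1
      simp only [Finset.sum_range_one, staircase] at h1
      omega
    rw [triangle_succ m hm1]
    exact ⟨⟨isPartitionOf_prependPart hm1 hf h0, dominatedBy_prependPart hm1 hd⟩,
      isPartitionOf_appendOnes m hf, dominatedBy_appendOnes hm1 hf hd⟩
  · intro f g hf hdf hg hdg hne
    have h1 := prependPart_ne_appendOnes hm f hdf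
    have h2 := prependPart_ne_appendOnes hm f hdg
    have h3 := prependPart_ne_appendOnes hm g hdf
    have h4 := prependPart_ne_appendOnes hm g hdg
    have h5 : prependPart m f ≠ prependPart m g := fun h => hne (prependPart_injective m h)
    have h6 : appendOnes m f ≠ appendOnes m g := fun h => hne (appendOnes_inj hf hg m h)
    simp [h1, h2, h3.symm, h4, h5, h6]
end

section
/- The proportion of partitions comparable to a self-conjugate partition tends to zero: for every ε > 0 there exists N such that for all n ≥ N and every self-conjugate partition λ of n, |C(λ)| ≤ ε · p(n). In particular, |C(ρ_m)| / p(m(m+1)/2) → 0 as m → ∞, i.e., the probability that a uniformly random partition of m(m+1)/2 is comparable in dominance order to the staircase partition ρ_m tends to zero. -/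
open Finset

/-! ### Partitions as functions, conjugation and dominance -/

theorem IsPartitionOf.sum_eq {n N : ℕ} {f : ℕ → ℕ} (h : IsPartitionOf n f) (hN : n ≤ N) :
    ∑ i ∈ range N, f i = n := by
  rw [← h.2.2]
  symm
  apply sum_subset
  · intro i hi; simp at *; omega
  · intro i _ hi; simp at hi; exact h.2.1 i hi

theorem isPartitionOf_of_sum {f : ℕ → ℕ} {N m : ℕ} (hf : ∀ i j, i ≤ j → f j ≤ f i)
    (h0 : ∀ i, N ≤ i → f i = 0) (hs : ∑ i ∈ range N, f i = m) : IsPartitionOf m f := by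
  have key : ∀ i, m ≤ i → f i = 0 := by
    intro i hi
    by_contra hne
    have hiN : i < N := by
      by_contra hh; exact hne (h0 i (by omega))
    have h1 : ∑ k ∈ range (i + 1), f k ≤ ∑ k ∈ range N, f k :=
      sum_le_sum_of_subset (by intro k hk; simp at *; omega)
    have h2 : ∑ k ∈ range (i + 1), 1 ≤ ∑ k ∈ range (i + 1), f k := by
      apply sum_le_sum
      intro k hk
      have := hf k i (by simp at hk; omega)
      omega
    simp at h2
    omega
  refine ⟨hf, key, ?_⟩
  refine Eq.trans ?_ hs
  rcases le_total m N with h | h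
  · apply sum_subset
    · intro i hi; simp at *; omega
    · intro i _ hi; simp at hi; exact key i hi
  · symm
    apply sum_subset
    · intro i hi; simp at *; omega
    · intro i _ hi; simp at hi; exact h0 i hi

theorem finite_partitions (n : ℕ) : {f : ℕ → ℕ | IsPartitionOf n f}.Finite := by
  apply Set.Finite.subset (Set.toFinite
    (Set.range (fun (g : Fin n → Fin (n + 1)) (i : ℕ) => if h : i < n then (g ⟨i, h⟩ : ℕ) else 0)))
  intro f hf
  have hb : ∀ i, f i ≤ n := by
    intro i
    by_cases hi : i < n
    · have := single_le_sum (f := f) (s := range n) (fun _ _ => Nat.zero_le _) (mem_range.2 hi)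
      rw [hf.2.2] at this
      exact this
    · rw [hf.2.1 i (by omega)]; omega
  refine ⟨fun i => ⟨f i, by have := hb i; omega⟩, ?_⟩
  funext i
  by_cases hi : i < n
  · simp [hi]
  · simp [hi, hf.2.1 i (by omega)]

/-- The finite set of partitions of `n`. -/
noncomputable def Par (n : ℕ) : Finset (ℕ → ℕ) := (finite_partitions n).toFinset

theorem mem_Par {n : ℕ} {f : ℕ → ℕ} : f ∈ Par n ↔ IsPartitionOf n f := by
  simp [Par]

/-- The Galois relation determines the conjugate. -/
theorem conjugate_eq_of {f g : ℕ → ℕ} (h : ∀ i j, j < g i ↔ i < f j) : conjugate f = g := by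
  funext i
  unfold conjugate
  have : {j | i < f j} = Set.Iio (g i) := by
    ext j; simp [h]
  rw [this, Set.ncard_eq_toFinset_card']
  simp

theorem lt_conjugate_iff {n : ℕ} {f : ℕ → ℕ} (h : IsPartitionOf n f) (i j : ℕ) :
    j < conjugate f i ↔ i < f j := by
  have hex : ∀ i, ∃ j, f j ≤ i := fun i => ⟨n, by rw [h.2.1 n le_rfl]; omega⟩
  classical
  have hg : ∀ i j, j < Nat.find (hex i) ↔ i < f j := by
    intro i j
    constructor
    · intro hj
      have := Nat.find_min (hex i) hj
      omega
    · intro hj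
      by_contra hcon
      have h1 := Nat.find_spec (hex i)
      have h2 := h.1 _ _ (not_lt.1 hcon)
      omega
  rw [conjugate_eq_of hg]
  exact hg i j

theorem conjugate_eq_card {n : ℕ} {f : ℕ → ℕ} (h : IsPartitionOf n f) (i : ℕ) :
    conjugate f i = #{j ∈ range n | i < f j} := by
  have : {j ∈ range n | i < f j} = range (conjugate f i) := by
    ext j
    simp only [mem_filter, mem_range, lt_conjugate_iff h]
    constructor
    · exact fun h => h.2
    · intro hj
      refine ⟨?_, hj⟩
      by_contra hc
      rw [h.2.1 j (by omega)] at hj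
      omega
  rw [this, card_range]

theorem sum_conjugate {n : ℕ} {f : ℕ → ℕ} (h : IsPartitionOf n f) (k : ℕ) :
    ∑ i ∈ range k, conjugate f i = ∑ j ∈ range n, min (f j) k := by
  simp_rw [conjugate_eq_card h, card_filter]
  rw [sum_comm]
  apply sum_congr rfl
  intro j _
  rw [← card_filter]
  have : {i ∈ range k | i < f j} = range (min (f j) k) := by
    ext i; simp; omega
  rw [this, card_range]

/-- Domination of an antitone sequence passes to the sums of excesses over any threshold. -/
theorem sum_max_le {d : ℕ} {F G : ℕ → ℤ} (hF : ∀ i j, i ≤ j → j < d → F j ≤ F i)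
    (h : ∀ k, k ≤ d → ∑ i ∈ range k, F i ≤ ∑ i ∈ range k, G i) (t : ℤ) :
    ∑ i ∈ range d, max (F i - t) 0 ≤ ∑ i ∈ range d, max (G i - t) 0 := by
  induction d with
  | zero => simp
  | succ d ih =>
    by_cases hd : t < F d
    · have h1 : ∑ i ∈ range (d + 1), max (F i - t) 0 = ∑ i ∈ range (d + 1), (F i - t) := by
        apply sum_congr rfl
        intro i hi
        have := hF i d (by simp at hi; omega) (by omega)
        omega
      have h2 : ∑ i ∈ range (d + 1), (G i - t) ≤ ∑ i ∈ range (d + 1), max (G i - t) 0 :=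
        sum_le_sum (fun i _ => le_max_left _ _)
      have h3 := h (d + 1) le_rfl
      rw [sum_sub_distrib] at h1 h2
      omega
    · have h1 := ih (fun i j hij hj => hF i j hij (by omega)) (fun k hk => h k (by omega))
      rw [sum_range_succ, sum_range_succ]
      have h2 : max (F d - t) 0 = 0 := by omega
      have h3 : 0 ≤ max (G d - t) 0 := le_max_right _ _
      omega

/-- Conjugation reverses the dominance order. -/
theorem dominatedBy_conjugate {n : ℕ} {f g : ℕ → ℕ} (hf : IsPartitionOf n f)
    (hg : IsPartitionOf n g) (h : DominatedBy f g) :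
    DominatedBy (conjugate g) (conjugate f) := by
  intro k
  rw [sum_conjugate hf, sum_conjugate hg]
  have h1 := sum_max_le (d := n) (F := fun i => (f i : ℤ)) (G := fun i => (g i : ℤ))
    (fun i j hij _ => by exact_mod_cast hf.1 i j hij)
    (fun k _ => by exact_mod_cast h k) k
  have h2 : ∀ u : ℕ → ℕ, IsPartitionOf n u →
      ((∑ j ∈ range n, min (u j) k : ℕ) : ℤ) = n - ∑ i ∈ range n, max ((u i : ℤ) - k) 0 := by
    intro u hu
    have h3 : ((∑ i ∈ range n, u i : ℕ) : ℤ) = n := by rw [hu.2.2]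
    rw [← h3]
    push_cast
    rw [← sum_sub_distrib]
    apply sum_congr rfl
    intro i _
    omega
  have h3 := h2 f hf
  have h4 := h2 g hg
  omega

/-- If a self-conjugate `l` dominates `μ`, it is dominated by `conjugate μ`; dually if `μ` dominates
`l`. -/
theorem comparable_conjugate {n : ℕ} {l μ : ℕ → ℕ} (hl : IsPartitionOf n l)
    (hc : conjugate l = l) (hμ : IsPartitionOf n μ) (h : DominatedBy μ l ∨ DominatedBy l μ) :
    DominatedBy μ (conjugate μ) ∨ DominatedBy (conjugate μ) μ := by
  rcases h with h | h
  · left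
    have h1 := dominatedBy_conjugate hμ hl h
    rw [hc] at h1
    exact fun k => (h k).trans (h1 k)
  · right
    have h1 := dominatedBy_conjugate hl hμ h
    rw [hc] at h1
    exact fun k => (h1 k).trans (h k)

/-! ### The ratio of consecutive partition numbers tends to one -/

theorem par_raise {n l t : ℕ} {f : ℕ → ℕ} (hf : IsPartitionOf n f) :
    IsPartitionOf (n + (l + 1) * t) (fun i => f i + if i ≤ l then t else 0) := by
  apply isPartitionOf_of_sum (N := n + l + 1)
  · intro i j hij
    have := hf.1 i j hij
    split_ifs <;> omega
  · intro i hi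
    rw [hf.2.1 i (by omega), if_neg (by omega)]
  · rw [sum_add_distrib, hf.sum_eq (by omega), ← sum_filter]
    have : {i ∈ range (n + l + 1) | i ≤ l} = range (l + 1) := by ext i; simp; omega
    rw [this]; simp

/-- Partitions of `n + (l+1) t` with `l`-th row shorter than `t` are not of the form
`f + t · 1_{≤ l}`. -/
theorem card_par_row_lt (n l t : ℕ) :
    #(Par n) + #{f ∈ Par (n + (l + 1) * t) | f l < t} ≤ #(Par (n + (l + 1) * t)) := by
  classical
  rw [← card_filter_add_card_filter_not (s := Par (n + (l + 1) * t)) (fun f => f l < t),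
    add_comm]
  refine Nat.add_le_add_left ?_ _
  apply card_le_card_of_injOn (fun f i => f i + if i ≤ l then t else 0)
  · intro f hf
    simp only [Finset.mem_coe, mem_filter, mem_Par] at *
    exact ⟨par_raise hf, by simp⟩
  · intro f _ g _ h
    funext i
    have := congrFun h i
    dsimp only at this
    omega

theorem par_mono {m n : ℕ} (h : m ≤ n) : #(Par m) ≤ #(Par n) := by
  obtain ⟨k, rfl⟩ := Nat.exists_eq_add_of_le h
  have := card_par_row_lt m 0 k
  simp only [zero_add, one_mul] at this
  omega

theorem par_pos (n : ℕ) : 0 < #(Par n) := by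
  refine lt_of_lt_of_le ?_ (par_mono (Nat.zero_le n))
  apply card_pos.2
  exact ⟨fun _ => 0, mem_Par.2 ⟨by simp, by simp, by simp⟩⟩

theorem card_par_succ (n : ℕ) :
    #(Par (n + 1)) ≤ #(Par n) + #{f ∈ Par (n + 1) | f 0 = f 1} := by
  classical
  rw [← card_filter_add_card_filter_not (s := Par (n + 1)) (fun f => f 0 = f 1), add_comm]
  refine Nat.add_le_add_right ?_ _
  apply card_le_card_of_injOn (fun f i => f i - if i = 0 then 1 else 0)
  · intro f hf
    simp only [Finset.mem_coe, mem_filter, mem_Par] at *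
    obtain ⟨hf, h01⟩ := hf
    have h1 := hf.1 0 1 (by omega)
    apply isPartitionOf_of_sum (N := n + 1)
    · intro i j hij
      have h2 := hf.1 i j hij
      rcases Nat.eq_zero_or_pos i with rfl | hi
      · have h4 : j ≠ 0 → f j ≤ f 1 := fun h => hf.1 1 j (by omega)
        split_ifs <;> omega
      · rw [if_neg (by omega), if_neg (by omega)]; omega
    · intro i hi
      rw [hf.2.1 i hi]; simp
    · have h3 := hf.2.2
      rw [sum_range_succ'] at h3 ⊢
      simp
      omega
  · intro f hf g hg h
    simp only [Finset.mem_coe, mem_filter, mem_Par] at *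
    have h1 := hf.1.1 0 1 (by omega)
    have h2 := hg.1.1 0 1 (by omega)
    funext i
    have := congrFun h i
    split_ifs at this with h3
    · subst h3; omega
    · omega

/-- The corners of a partition of `n`: the rows that are longer than the next one. -/
def corners (n : ℕ) (f : ℕ → ℕ) : Finset ℕ := {i ∈ range n | f (i + 1) < f i}

/-- Shortening the first `i + 1` rows by one at a corner `i ≥ 1` and lengthening the first row
by `i + 1` is a move from which `i` can be read off when the first two rows agreed. Hence
partitions with two equal longest rows and many corners are rare. -/
theorem card_many_corners (n D : ℕ) :
    D * #{f ∈ Par n | f 0 = f 1 ∧ D ≤ #(corners n f)} ≤ #(Par n) := by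
  classical
  set U := {f ∈ Par n | f 0 = f 1 ∧ D ≤ #(corners n f)}
  let mv : (ℕ → ℕ) → ℕ → ℕ → ℕ := fun f c i =>
    f i + (if i = 0 then c + 1 else 0) - (if i ≤ c then 1 else 0)
  have hpos : ∀ f ∈ U, ∀ c ∈ corners n f, 1 ≤ c ∧ IsPartitionOf n f ∧ f 0 = f 1 ∧
      f (c + 1) < f c ∧ c < n := by
    intro f hf c hc
    simp only [corners, mem_filter, mem_range] at hc
    simp only [U, mem_filter, mem_Par] at hf
    refine ⟨?_, hf.1, hf.2.1, hc.2, hc.1⟩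
    rcases Nat.eq_zero_or_pos c with rfl | h
    · have := hc.2; simp at this; omega
    · exact h
  have h1 : D * #U ≤ #(U.sigma (fun f => corners n f)) := by
    rw [card_sigma, mul_comm]
    apply card_nsmul_le_sum
    intro f hf
    simp only [U, mem_filter] at hf
    exact hf.2.2
  refine h1.trans ?_
  apply card_le_card_of_injOn (fun p => mv p.1 p.2)
  · rintro ⟨f, c⟩ h
    simp only [Finset.mem_coe, mem_sigma] at h
    obtain ⟨hc, hf, h01, hcc, hcn⟩ := hpos f h.1 c h.2
    simp only [Finset.mem_coe, mem_Par, mv]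
    apply isPartitionOf_of_sum (N := n)
    · intro i j hij
      have h2 := hf.1 i j hij
      have h3 : i ≤ c → f c ≤ f i := fun h => hf.1 i c h
      have h4 : c + 1 ≤ j → f j ≤ f (c + 1) := fun h => hf.1 (c + 1) j h
      split_ifs <;> omega
    · intro i hi
      rw [hf.2.1 i hi, if_neg (by omega)]; omega
    · have hs := hf.2.2
      have h5 : ∑ i ∈ range n, (f i + (if i = 0 then c + 1 else 0) - (if i ≤ c then 1 else 0))
          + ∑ i ∈ range n, (if i ≤ c then 1 else 0)
          = ∑ i ∈ range n, (f i + (if i = 0 then c + 1 else 0)) := by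
        rw [← sum_add_distrib]
        apply sum_congr rfl
        intro i _
        have h3 : i ≤ c → f c ≤ f i := fun h => hf.1 i c h
        split_ifs <;> omega
      rw [sum_add_distrib, hs, sum_ite_eq', if_pos (by simp; omega), ← sum_filter] at h5
      have : {i ∈ range n | i ≤ c} = range (c + 1) := by ext i; simp; omega
      rw [this] at h5
      simp at h5
      omega
  · rintro ⟨f, c⟩ h ⟨g, e⟩ h' heq
    simp only [Finset.mem_coe, mem_sigma] at h h'
    obtain ⟨hc, hf, h01, hcc, hcn⟩ := hpos f h.1 c h.2
    obtain ⟨he, hg, g01, hee, hen⟩ := hpos g h'.1 e h'.2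
    have a1 := hf.1 0 c (by omega)
    have a2 := hg.1 0 e (by omega)
    have e0 := congrFun heq 0
    have e1 := congrFun heq 1
    simp only [mv] at e0 e1
    simp [hc, he] at e0 e1
    obtain rfl : c = e := by omega
    congr 1
    funext i
    have e2 := congrFun heq i
    simp only [mv] at e2
    have h3 : i ≤ c → f c ≤ f i := fun h => hf.1 i c h
    have h4 : i ≤ c → g c ≤ g i := fun h => hg.1 i c h
    split_ifs at e2 <;> omega

/-- A partition is determined by its corners and the row lengths there. -/
theorem card_few_corners (n D : ℕ) :
    #{f ∈ Par n | #(corners n f) < D} ≤ D * ((n + 1) ^ 2) ^ D := by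
  classical
  have h1 : #{f ∈ Par n | #(corners n f) < D} ≤
      #((range D).biUnion (fun c => powersetCard c (range (n + 1) ×ˢ range (n + 1)))) := by
    apply card_le_card_of_injOn (fun f => (corners n f).image (fun i => (i, f i)))
    · intro f hf
      simp only [Finset.mem_coe, mem_filter, mem_Par] at hf
      simp only [Finset.mem_coe, mem_biUnion, mem_range, mem_powersetCard]
      refine ⟨_, hf.2, ?_, card_image_of_injective _ (fun i j h => (Prod.mk.inj h).1)⟩
      intro p hp
      simp only [mem_image, corners, mem_filter, mem_range] at hp
      obtain ⟨i, ⟨hi, _⟩, rfl⟩ := hp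
      have := single_le_sum (f := f) (s := range n) (fun _ _ => Nat.zero_le _) (mem_range.2 hi)
      rw [hf.1.2.2] at this
      simp; omega
    · -- downward induction: away from the corners a row has the length of the next one
      have key : ∀ f g : ℕ → ℕ, IsPartitionOf n f → IsPartitionOf n g →
          (corners n f).image (fun i => (i, f i)) = (corners n g).image (fun i => (i, g i)) →
          ∀ k i, i + k = n → f i ≤ g i := by
        intro f g hf hg h k
        induction k with
        | zero => intro i hi; rw [hf.2.1 i (by omega)]; omega
        | succ k ih =>
          intro i hi
          have h2 := ih (i + 1) (by omega)
          by_cases hc : i ∈ corners n f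
          · have : (i, f i) ∈ (corners n g).image (fun i => (i, g i)) := by
              rw [← h]; exact mem_image_of_mem _ hc
            simp only [mem_image, Prod.mk.injEq] at this
            obtain ⟨a, _, rfl, h3⟩ := this
            omega
          · simp only [corners, mem_filter, mem_range, not_and, not_lt] at hc
            have := hc (by omega)
            have := hg.1 i (i + 1) (by omega)
            omega
      intro f hf g hg h
      simp only [Finset.mem_coe, mem_filter, mem_Par] at hf hg
      funext i
      by_cases hi : i < n
      · exact le_antisymm (key f g hf.1 hg.1 h (n - i) i (by omega))
          (key g f hg.1 hf.1 h.symm (n - i) i (by omega))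
      · rw [hf.1.2.1 i (by omega), hg.1.2.1 i (by omega)]
  refine h1.trans (card_biUnion_le.trans ?_)
  calc ∑ c ∈ range D, #(powersetCard c (range (n + 1) ×ˢ range (n + 1)))
      ≤ ∑ c ∈ range D, ((n + 1) ^ 2) ^ D := by
        apply sum_le_sum
        intro c hc
        rw [card_powersetCard, card_product, card_range, ← sq]
        refine (Nat.choose_le_pow _ _).trans ?_
        apply Nat.pow_le_pow_right (by positivity)
        simp at hc; omega
    _ = _ := by simp

/-- Sets of distinct parts from `{2, …, k + 1}`, completed by parts `1`, give exponentially many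
partitions. -/
theorem two_pow_le_par (k n : ℕ) (h : (k + 1) ^ 2 ≤ n) : 2 ^ k ≤ #(Par n) := by
  classical
  have hc : 2 ^ k = #(Icc 1 k).powerset := by simp
  rw [hc]
  let F : Finset ℕ → ℕ → ℕ := fun S i =>
    #{x ∈ S | i ≤ x} + if i = 0 then n - ∑ x ∈ S, (x + 1) else 0
  have hsum : ∀ S ⊆ Icc 1 k, ∑ x ∈ S, (x + 1) ≤ n := by
    intro S hS
    calc ∑ x ∈ S, (x + 1) ≤ ∑ x ∈ Icc 1 k, (x + 1) := sum_le_sum_of_subset hS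
      _ ≤ ∑ x ∈ Icc 1 k, (k + 1) := sum_le_sum (fun x hx => by simp at hx; omega)
      _ ≤ n := by simp; nlinarith
  apply card_le_card_of_injOn F
  · intro S hS
    simp only [Finset.mem_coe, mem_powerset] at hS
    simp only [Finset.mem_coe, mem_Par]
    apply isPartitionOf_of_sum (N := k + 1)
    · intro i j hij
      have : #{x ∈ S | j ≤ x} ≤ #{x ∈ S | i ≤ x} :=
        card_le_card (monotone_filter_right _ (fun x _ hx => hij.trans hx))
      simp only [F]
      split_ifs <;> omega
    · intro i hi
      have : {x ∈ S | i ≤ x} = ∅ := by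
        apply filter_eq_empty_iff.2
        intro x hx
        have := hS hx
        simp at this; omega
      simp only [F, this, card_empty]
      rw [if_neg (by omega)]
    · simp only [F]
      rw [sum_add_distrib, sum_ite_eq', if_pos (by simp)]
      simp_rw [card_filter]
      rw [sum_comm]
      have : ∀ x ∈ S, ∑ i ∈ range (k + 1), (if i ≤ x then 1 else 0) = x + 1 := by
        intro x hx
        have h2 := hS hx
        simp at h2
        rw [← card_filter]
        have : {i ∈ range (k + 1) | i ≤ x} = range (x + 1) := by ext i; simp; omega
        rw [this, card_range]
      rw [sum_congr rfl this]
      have := hsum S hS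
      omega
  · -- membership of `i ≥ 1` in `S` is the difference of two consecutive rows
    have key : ∀ S ⊆ Icc 1 k, ∀ i, 1 ≤ i → F S i = F S (i + 1) + if i ∈ S then 1 else 0 := by
      intro S hS i hi
      simp only [F]
      rw [if_neg (by omega), if_neg (by omega), card_filter, card_filter,
        ← sum_ite_eq' S i (fun _ => 1), add_zero, add_zero, ← sum_add_distrib]
      apply sum_congr rfl
      intro x _
      split_ifs <;> omega
    intro S hS T hT hST
    simp only [Finset.mem_coe, mem_powerset] at hS hT
    ext i
    by_cases hi : 1 ≤ i
    · have h1 := key S hS i hi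
      have h2 := key T hT i hi
      rw [hST] at h1
      have h3 : (if i ∈ S then 1 else 0) = if i ∈ T then 1 else 0 := by omega
      by_cases h4 : i ∈ S <;> by_cases h5 : i ∈ T <;> simp [h4, h5] at h3 ⊢
    · constructor
      · intro h; have := hS h; simp at this; omega
      · intro h; have := hT h; simp at this; omega

open Filter in
/-- There are only polynomially many partitions with a bounded number of corners, while the
number of all partitions grows faster than any polynomial. -/
theorem card_few_corners_small (D : ℕ) (η : ℝ) (hη : 0 < η) :
    ∀ᶠ n in atTop, (#{f ∈ Par n | #(corners n f) < D} : ℝ) ≤ η * #(Par n) := by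
  have h1 := tendsto_pow_const_div_const_pow_of_one_lt (4 * D) (r := (2 : ℝ)) (by norm_num)
  have h2 := h1.const_mul ((D : ℝ) * 4 ^ (4 * D))
  rw [mul_zero] at h2
  have h3 := h2.eventually_lt_const hη
  have h4 : Tendsto (fun n : ℕ => Nat.sqrt n - 1) atTop atTop := by
    apply tendsto_atTop.2
    intro b
    filter_upwards [eventually_ge_atTop ((b + 1) ^ 2)] with n hn
    have := Nat.le_sqrt'.2 hn
    omega
  filter_upwards [h4.eventually h3, eventually_ge_atTop 4] with n hn hn4
  set k := Nat.sqrt n - 1 with hk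
  have hs : 2 ≤ Nat.sqrt n := Nat.le_sqrt'.2 (by omega)
  have hk1 : (k + 1) ^ 2 ≤ n := by
    rw [hk, Nat.sub_add_cancel (by omega)]; exact Nat.sqrt_le' n
  have hk2 : n + 1 ≤ (4 * k) ^ 2 := by
    have : n < (Nat.sqrt n + 1) ^ 2 := Nat.lt_succ_sqrt' n
    have h5 : Nat.sqrt n + 1 ≤ 4 * k := by omega
    have := Nat.pow_le_pow_left h5 2
    omega
  have h5 : #{f ∈ Par n | #(corners n f) < D} ≤ D * (4 * k) ^ (4 * D) := by
    refine (card_few_corners n D).trans ?_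
    apply Nat.mul_le_mul_left
    calc ((n + 1) ^ 2) ^ D ≤ (((4 * k) ^ 2) ^ 2) ^ D := by gcongr
      _ = _ := by rw [← pow_mul, ← pow_mul]; congr 1; ring
  have h6 := two_pow_le_par k n hk1
  have h7 : (D : ℝ) * 4 ^ (4 * D) * (k : ℝ) ^ (4 * D) < η * 2 ^ k := by
    rw [← mul_div_assoc, div_lt_iff₀ (by positivity)] at hn
    exact hn
  calc (#{f ∈ Par n | #(corners n f) < D} : ℝ) ≤ ((D * (4 * k) ^ (4 * D) : ℕ) : ℝ) := by
        exact_mod_cast h5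
    _ = (D : ℝ) * 4 ^ (4 * D) * (k : ℝ) ^ (4 * D) := by push_cast; ring
    _ ≤ η * 2 ^ k := h7.le
    _ ≤ η * #(Par n) := by
      gcongr
      exact_mod_cast h6

open Filter in
/-- `p(n) / p(n + 1) → 1`: removing a box from the first row fails only if the first two rows agree,
which is rare. -/
theorem card_par_succ_le (η : ℝ) (hη : 0 < η) :
    ∀ᶠ n in atTop, (1 - η) * (#(Par (n + 1)) : ℝ) ≤ #(Par n) := by
  classical
  obtain ⟨D, hD⟩ := exists_nat_gt (2 / η)
  have hD0 : (0 : ℝ) < D := lt_trans (by positivity) hD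
  have h1 := (tendsto_add_atTop_nat 1).eventually (card_few_corners_small D (η / 2) (by positivity))
  filter_upwards [h1] with n hn
  have h2 := card_par_succ n
  have h3 : #{f ∈ Par (n + 1) | f 0 = f 1} ≤
      #{f ∈ Par (n + 1) | f 0 = f 1 ∧ D ≤ #(corners (n + 1) f)} +
      #{f ∈ Par (n + 1) | #(corners (n + 1) f) < D} := by
    rw [← card_filter_add_card_filter_not (s := {f ∈ Par (n + 1) | f 0 = f 1})
      (fun f => D ≤ #(corners (n + 1) f)), filter_filter, filter_filter]
    gcongr
    intro h
    omega
  have h4 := card_many_corners (n + 1) D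
  have h5 : (#{f ∈ Par (n + 1) | f 0 = f 1 ∧ D ≤ #(corners (n + 1) f)} : ℝ) ≤
      η / 2 * #(Par (n + 1)) := by
    have h6 : (D : ℝ) * #{f ∈ Par (n + 1) | f 0 = f 1 ∧ D ≤ #(corners (n + 1) f)} ≤
        #(Par (n + 1)) := by exact_mod_cast h4
    have h7 : 1 ≤ η / 2 * D := by
      rw [div_lt_iff₀ hη] at hD; linarith
    have h8 : (0 : ℝ) ≤ #{f ∈ Par (n + 1) | f 0 = f 1 ∧ D ≤ #(corners (n + 1) f)} := by
      positivity
    nlinarith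
  have h2' : (#(Par (n + 1)) : ℝ) ≤ #(Par n) + #{f ∈ Par (n + 1) | f 0 = f 1} := by
    exact_mod_cast h2
  have h3' : (#{f ∈ Par (n + 1) | f 0 = f 1} : ℝ) ≤
      #{f ∈ Par (n + 1) | f 0 = f 1 ∧ D ≤ #(corners (n + 1) f)} +
      #{f ∈ Par (n + 1) | #(corners (n + 1) f) < D} := by exact_mod_cast h3
  linarith

open Filter in
/-- `p(n) / p(n + k) → 1` for every fixed `k`. -/
theorem card_par_add_le (k : ℕ) (η : ℝ) (hη : 0 < η) :
    ∀ᶠ n in atTop, (1 - η) * (#(Par (n + k)) : ℝ) ≤ #(Par n) := by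
  induction k generalizing η with
  | zero =>
    filter_upwards with n
    have : (0 : ℝ) ≤ #(Par n) := by positivity
    simp only [add_zero]; nlinarith
  | succ k ih =>
    have h1 := (tendsto_add_atTop_nat k).eventually (card_par_succ_le (η / 2) (by positivity))
    filter_upwards [h1, ih (η / 2) (by positivity)] with n h2 h3
    rw [← add_assoc]
    have h4 : (#(Par (n + k)) : ℝ) ≤ #(Par (n + k + 1)) := by
      exact_mod_cast par_mono (by omega)
    nlinarith

/-! ### Frobenius coordinates -/

/-- Candidates for the Frobenius coordinates of a partition: the Durfee size `d` together with,
for each colour (`true` for rows, `false` for columns), a sequence of `d` integers, padded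
with zeros. -/
abbrev State := ℕ × (Bool → ℕ → ℤ)

/-- `s` is the system of Frobenius coordinates of a partition of `m`: both sequences are strictly
decreasing and nonnegative, and the hooks `s.2 true i + s.2 false i + 1` have total size `m`. -/
def IsSt (m : ℤ) (s : State) : Prop :=
  (∀ c i, s.1 ≤ i → s.2 c i = 0) ∧ (∀ c i, i + 1 < s.1 → s.2 c (i + 1) < s.2 c i) ∧
  (∀ c i, i < s.1 → 0 ≤ s.2 c i) ∧
  ∑ i ∈ range s.1, (s.2 true i + s.2 false i + 1) = m

theorem IsSt.add_le {m : ℤ} {s : State} (h : IsSt m s) (c : Bool) {i j : ℕ} (hij : i ≤ j)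
    (hj : j < s.1) : s.2 c j + j ≤ s.2 c i + i := by
  induction j, hij using Nat.le_induction with
  | base => exact le_rfl
  | succ j hij ih =>
    have := ih (by omega)
    have := h.2.1 c j hj
    push_cast
    omega

theorem IsSt.lt {m : ℤ} {s : State} (h : IsSt m s) (c : Bool) {i j : ℕ} (hij : i < j)
    (hj : j < s.1) : s.2 c j < s.2 c i := by
  have := h.add_le c hij.le hj
  omega

theorem IsSt.lower {m : ℤ} {s : State} (h : IsSt m s) (c : Bool) {i : ℕ} (hi : i < s.1) :
    (s.1 : ℤ) ≤ s.2 c i + i + 1 := by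
  have h1 := h.add_le c (i := i) (j := s.1 - 1) (by omega) (by omega)
  have h2 := h.2.2.1 c (s.1 - 1) (by omega)
  omega

theorem lt_card_filter_iff {d j : ℕ} {P : ℕ → Prop} [DecidablePred P]
    (hP : ∀ a b, a ≤ b → b < d → P b → P a) :
    j < #{k ∈ range d | P k} ↔ j < d ∧ P j := by
  constructor
  · intro h
    by_contra hc
    have : {k ∈ range d | P k} ⊆ range j := by
      intro k hk
      simp only [mem_filter, mem_range] at *
      by_contra hkj
      exact hc ⟨by omega, hP j k (by omega) hk.1 hk.2⟩
    have := card_le_card this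
    simp at this
    omega
  · rintro ⟨h1, h2⟩
    have : range (j + 1) ⊆ {k ∈ range d | P k} := by
      intro k hk
      simp only [mem_filter, mem_range] at *
      exact ⟨by omega, hP k j (by omega) h1 h2⟩
    have := card_le_card this
    simp at this
    omega

/-- The partition (for `c = true`) with given Frobenius coordinates, or its conjugate (for
`c = false`). -/
noncomputable def toPart (s : State) (c : Bool) (i : ℕ) : ℕ :=
  if i < s.1 then (s.2 c i).toNat + i + 1 else #{k ∈ range s.1 | i ≤ (s.2 (!c) k).toNat + k}

theorem lt_toPart_iff {m : ℤ} {s : State} (h : IsSt m s) (c : Bool) (i j : ℕ) :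
    i < toPart s c j ↔ j < toPart s (!c) i := by
  have key : ∀ (c : Bool) (i j : ℕ),
      j < #{k ∈ range s.1 | i ≤ (s.2 c k).toNat + k} ↔ j < s.1 ∧ i ≤ (s.2 c j).toNat + j := by
    intro c i j
    apply lt_card_filter_iff
    intro a b hab hb
    have h1 := h.add_le c hab hb
    have h2 := h.2.2.1 c a (by omega)
    have h3 := h.2.2.1 c b (by omega)
    omega
  unfold toPart
  rw [Bool.not_not]
  by_cases hi : i < s.1 <;> by_cases hj : j < s.1
  · have h1 := h.lower c hj
    have h2 := h.lower (!c) hi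
    simp only [hi, hj, if_true]
    omega
  · rw [if_neg hj, if_pos hi, key]
    omega
  · rw [if_pos hj, if_neg hi, key]
    omega
  · simp only [hi, hj, if_false, key, false_and]

theorem conjugate_toPart {m : ℤ} {s : State} (h : IsSt m s) :
    conjugate (toPart s true) = toPart s false :=
  conjugate_eq_of (fun i j => (lt_toPart_iff h true i j).symm)

theorem sum_range_odd (d : ℕ) : ∑ i ∈ range d, (2 * (i : ℤ) + 1) = d * d := by
  induction d with
  | zero => simp
  | succ d ih => rw [sum_range_succ, ih]; push_cast; ring

theorem isPartitionOf_toPart {n : ℕ} {s : State} (h : IsSt n s) :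
    IsPartitionOf n (toPart s true) := by
  classical
  set d := s.1 with hd
  set N := (s.2 false 0).toNat + 1 + d with hN
  have hb : ∀ k < d, (s.2 false k).toNat + k + 1 ≤ N ∧ d ≤ (s.2 false k).toNat + k + 1 := by
    intro k hk
    have h1 := h.add_le false (Nat.zero_le k) hk
    have h2 := h.2.2.1 false k hk
    have h3 := h.lower false hk
    omega
  apply isPartitionOf_of_sum (N := N)
  · intro i j hij
    apply le_of_forall_lt
    intro k hk
    rw [lt_toPart_iff h] at *
    omega
  · intro i hi
    have h1 : ¬ i < d := by omega
    simp only [toPart, ← hd, h1, if_false, Bool.not_true]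
    rw [card_eq_zero, filter_eq_empty_iff]
    intro k hk
    have := hb k (by simpa using hk)
    omega
  · rw [range_eq_Ico, ← sum_Ico_consecutive _ (Nat.zero_le d) (by omega : d ≤ N), ← range_eq_Ico]
    have h1 : ∑ i ∈ Ico d N, toPart s true i = ∑ k ∈ range d, ((s.2 false k).toNat + k + 1 - d) := by
      have : ∀ i ∈ Ico d N, toPart s true i =
          ∑ k ∈ range d, if i ≤ (s.2 false k).toNat + k then 1 else 0 := by
        intro i hi
        simp only [mem_Ico] at hi
        have h1 : ¬ i < d := by omega
        simp only [toPart, ← hd, h1, if_false, Bool.not_true, card_filter]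
      rw [sum_congr rfl this, sum_comm]
      apply sum_congr rfl
      intro k hk
      have := hb k (by simpa using hk)
      rw [← card_filter]
      have h2 : {i ∈ Ico d N | i ≤ (s.2 false k).toNat + k} =
          Ico d ((s.2 false k).toNat + k + 1) := by
        ext i; simp; omega
      rw [h2, Nat.card_Ico]
    have h2 : ∑ i ∈ range d, toPart s true i = ∑ i ∈ range d, ((s.2 true i).toNat + i + 1) := by
      apply sum_congr rfl
      intro i hi
      simp only [toPart, ← hd, mem_range.1 hi, if_true]
    rw [h1, h2]
    have h3 : ((∑ i ∈ range d, ((s.2 true i).toNat + i + 1) +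
        ∑ k ∈ range d, ((s.2 false k).toNat + k + 1 - d) : ℕ) : ℤ) =
        ∑ i ∈ range d, (s.2 true i + s.2 false i + 1) +
        (∑ i ∈ range d, (2 * (i : ℤ) + 1) - ∑ i ∈ range d, (d : ℤ)) := by
      push_cast
      rw [← sum_sub_distrib, ← sum_add_distrib, ← sum_add_distrib]
      apply sum_congr rfl
      intro i hi
      have hi' := mem_range.1 hi
      have h4 := hb i hi'
      have h5 := h.2.2.1 true i hi'
      have h6 := h.2.2.1 false i hi'
      rw [Nat.cast_sub h4.2]
      push_cast
      rw [Int.toNat_of_nonneg h5, Int.toNat_of_nonneg h6]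
      ring
    rw [h.2.2.2, sum_range_odd] at h3
    simp only [sum_const, card_range, nsmul_eq_mul, sub_self, add_zero] at h3
    exact_mod_cast h3

theorem toPart_le {s : State} {c : Bool} {i : ℕ} (hi : s.1 ≤ i) : toPart s c i ≤ s.1 := by
  rw [toPart, if_neg (by omega)]
  exact (card_filter_le _ _).trans (by simp)

theorem toPart_injOn (m : ℤ) : Set.InjOn (fun s => toPart s true) {s | IsSt m s} := by
  intro s hs t ht hst
  have hc : ∀ c, toPart s c = toPart t c := by
    have h1 : toPart s true = toPart t true := hst
    intro c
    cases c
    · rw [← conjugate_toPart hs, ← conjugate_toPart ht, h1]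
    · exact h1
  have hd : s.1 = t.1 := by
    have key : ∀ s : State, ∀ i, i < s.1 ↔ i < toPart s true i := by
      intro s i
      constructor
      · intro h; simp only [toPart, h, if_true]; omega
      · intro h; by_contra hc
        have := toPart_le (c := true) (not_lt.1 hc)
        omega
    have h2 : ∀ i, i < s.1 ↔ i < t.1 := by
      intro i; rw [key s, key t, hc]
    exact le_antisymm (le_of_forall_lt fun i => (h2 i).1) (le_of_forall_lt fun i => (h2 i).2)
  refine Prod.ext hd ?_
  funext c i
  by_cases hi : i < s.1
  · have h1 := congrFun (hc c) i
    simp only [toPart, ← hd, hi, if_true] at h1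
    have h2 := hs.2.2.1 c i hi
    have h3 := ht.2.2.1 c i (by omega)
    omega
  · rw [hs.1 c i (by omega), ht.1 c i (by omega)]

theorem finite_st (n : ℕ) : {s : State | IsSt n s}.Finite := by
  refine Set.Finite.of_injOn (t := {f | IsPartitionOf n f}) ?_ (toPart_injOn n)
    (finite_partitions n)
  intro s hs
  exact isPartitionOf_toPart hs

/-- The finite set of Frobenius coordinates of partitions of `n`. -/
noncomputable def St (n : ℕ) : Finset State := (finite_st n).toFinset

theorem mem_St {n : ℕ} {s : State} : s ∈ St n ↔ IsSt n s := by simp [St]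

/-- The Frobenius coordinates of a partition of `n`. -/
noncomputable def ofPart (n : ℕ) (f : ℕ → ℕ) : State :=
  (#{i ∈ range n | i < f i},
    fun c i => if i < #{i ∈ range n | i < f i} then
      ((if c then f i else conjugate f i : ℕ) : ℤ) - i - 1 else 0)

theorem lt_ofPart_iff {n : ℕ} {f : ℕ → ℕ} (hf : IsPartitionOf n f) (i : ℕ) :
    i < (ofPart n f).1 ↔ i < f i := by
  unfold ofPart
  dsimp only
  rw [lt_card_filter_iff]
  · constructor
    · exact fun h => h.2
    · intro h
      refine ⟨?_, h⟩
      by_contra hc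
      rw [hf.2.1 i (by omega)] at h
      omega
  · intro a b hab _ hb
    have := hf.1 a b hab
    omega

theorem ofPart_true {n : ℕ} {f : ℕ → ℕ} {i : ℕ} (hi : i < (ofPart n f).1) :
    (ofPart n f).2 true i = (f i : ℤ) - i - 1 := by
  unfold ofPart at *
  dsimp only at *
  simp [hi]

theorem ofPart_false {n : ℕ} {f : ℕ → ℕ} {i : ℕ} (hi : i < (ofPart n f).1) :
    (ofPart n f).2 false i = (conjugate f i : ℤ) - i - 1 := by
  unfold ofPart at *
  dsimp only at *
  simp [hi]

theorem conjugate_anti {n : ℕ} {f : ℕ → ℕ} (hf : IsPartitionOf n f) {i j : ℕ} (hij : i ≤ j) :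
    conjugate f j ≤ conjugate f i := by
  apply le_of_forall_lt
  intro k hk
  rw [lt_conjugate_iff hf] at *
  omega

theorem isSt_ofPart {n : ℕ} {f : ℕ → ℕ} (hf : IsPartitionOf n f) : IsSt n (ofPart n f) := by
  classical
  set d := (ofPart n f).1 with hd
  have hdf : ∀ i, i < d ↔ i < f i := lt_ofPart_iff hf
  have hdc : ∀ i, i < d ↔ i < conjugate f i := by
    intro i; rw [lt_conjugate_iff hf, hdf]
  have hdn : d ≤ n := by
    by_contra h
    have := (hdf n).1 (by omega)
    rw [hf.2.1 n le_rfl] at this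
    omega
  refine ⟨?_, ?_, ?_, ?_⟩
  · intro c i hi
    have : ¬ i < d := by omega
    unfold ofPart
    dsimp only
    exact if_neg this
  · intro c i hi
    have h1 := hf.1 i (i + 1) (by omega)
    have h2 := conjugate_anti hf (i := i) (j := i + 1) (by omega)
    cases c
    · rw [ofPart_false hi, ofPart_false (by omega)]; push_cast; omega
    · rw [ofPart_true hi, ofPart_true (by omega)]; push_cast; omega
  · intro c i hi
    have h1 := (hdf i).1 hi
    have h2 := (hdc i).1 hi
    cases c
    · rw [ofPart_false hi]; omega
    · rw [ofPart_true hi]; omega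
  · have h1 : ∑ i ∈ Ico d n, f i = ∑ k ∈ range d, (conjugate f k - d) := by
      have : ∀ i ∈ Ico d n, f i = ∑ k ∈ range d, if k < f i then 1 else 0 := by
        intro i hi
        simp only [mem_Ico] at hi
        rw [← card_filter]
        have h2 : {k ∈ range d | k < f i} = range (f i) := by
          ext k
          simp only [mem_filter, mem_range, and_iff_right_iff_imp]
          intro hk
          have h3 : f i ≤ f d := hf.1 d i hi.1
          have h4 := (hdf d).2
          omega
        rw [h2, card_range]
      rw [sum_congr rfl this, sum_comm]
      apply sum_congr rfl
      intro k hk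
      rw [← card_filter]
      have h2 : {i ∈ Ico d n | k < f i} = Ico d (conjugate f k) := by
        ext i
        simp only [mem_filter, mem_Ico, ← lt_conjugate_iff hf]
        constructor
        · exact fun h => ⟨h.1.1, h.2⟩
        · intro h
          refine ⟨⟨h.1, ?_⟩, h.2⟩
          by_contra hc
          have := (lt_conjugate_iff hf _ _).1 h.2
          rw [hf.2.1 i (by omega)] at this
          omega
      rw [h2, Nat.card_Ico]
    have h0 := hf.2.2
    rw [range_eq_Ico, ← sum_Ico_consecutive _ (Nat.zero_le d) hdn, ← range_eq_Ico, h1] at h0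
    have hcd : ∀ k < d, d ≤ conjugate f k := by
      intro k hk
      have h3 := (hdc (d - 1)).1 (by omega)
      have h4 := conjugate_anti hf (i := k) (j := d - 1) (by omega)
      omega
    have h3 : ((∑ i ∈ range d, f i + ∑ k ∈ range d, (conjugate f k - d) : ℕ) : ℤ) =
        ∑ i ∈ range d, ((ofPart n f).2 true i + (ofPart n f).2 false i + 1) +
        (∑ i ∈ range d, (2 * (i : ℤ) + 1) - ∑ i ∈ range d, (d : ℤ)) := by
      push_cast
      rw [← sum_sub_distrib, ← sum_add_distrib, ← sum_add_distrib]
      apply sum_congr rfl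
      intro i hi
      have hi' := mem_range.1 hi
      rw [ofPart_true hi', ofPart_false hi']
      push_cast [Nat.cast_sub (hcd i hi')]
      ring
    rw [h0, sum_range_odd] at h3
    simp at h3
    exact h3.symm

theorem ofPart_injOn (n : ℕ) : Set.InjOn (ofPart n) {f | IsPartitionOf n f} := by
  intro f hf g hg h
  have hd : (ofPart n f).1 = (ofPart n g).1 := by rw [h]
  have h1 : ∀ i, i < (ofPart n f).1 → f i = g i := by
    intro i hi
    have h2 := ofPart_true hi
    rw [h, ofPart_true (by omega)] at h2
    omega
  have h2 : ∀ i, i < (ofPart n f).1 → conjugate f i = conjugate g i := by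
    intro i hi
    have h2 := ofPart_false hi
    rw [h, ofPart_false (by omega)] at h2
    omega
  funext i
  by_cases hi : i < (ofPart n f).1
  · exact h1 i hi
  · have hfd : ∀ k, k < f i → k < (ofPart n f).1 := by
      intro k hk
      have h3 := (lt_ofPart_iff hf i).not.1 hi
      have h4 := hf.1 k i (by omega)
      exact (lt_ofPart_iff hf k).2 (by omega)
    have hgd : ∀ k, k < g i → k < (ofPart n f).1 := by
      intro k hk
      rw [hd] at hi ⊢
      have h3 := (lt_ofPart_iff hg i).not.1 hi
      have h4 := hg.1 k i (by omega)
      exact (lt_ofPart_iff hg k).2 (by omega)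
    apply le_antisymm
    · apply le_of_forall_lt
      intro k hk
      rw [← lt_conjugate_iff hg, ← h2 k (hfd k hk), lt_conjugate_iff hf]
      exact hk
    · apply le_of_forall_lt
      intro k hk
      rw [← lt_conjugate_iff hf, h2 k (hgd k hk), lt_conjugate_iff hg]
      exact hk

theorem card_St (n : ℕ) : #(St n) = #(Par n) := by
  apply le_antisymm
  · apply card_le_card_of_injOn (fun s => toPart s true)
    · intro s hs
      simp only [Finset.mem_coe, mem_St, mem_Par] at *
      exact isPartitionOf_toPart hs
    · intro s hs t ht
      simp only [Finset.mem_coe, mem_St] at hs ht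
      exact toPart_injOn n hs ht
  · apply card_le_card_of_injOn (ofPart n)
    · intro s hs
      simp only [Finset.mem_coe, mem_St, mem_Par] at *
      exact isSt_ofPart hs
    · intro s hs t ht
      simp only [Finset.mem_coe, mem_Par] at hs ht
      exact ofPart_injOn n hs ht

/-- The sum of the excesses over any threshold is at most as large in the `c`-coloured sequence
as in the other one. -/
def Bad (c : Bool) (s : State) : Prop :=
  ∀ t : ℤ, ∑ i ∈ range s.1, max (s.2 c i - t) 0 ≤ ∑ i ∈ range s.1, max (s.2 (!c) i - t) 0

/-- Up to the Durfee size the coordinates are the row lengths minus `i + 1`, so partial sums of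
rows can be compared through the coordinates. -/
theorem bad_ofPart {n : ℕ} {f : ℕ → ℕ} (hf : IsPartitionOf n f) :
    (DominatedBy f (conjugate f) → Bad true (ofPart n f)) ∧
    (DominatedBy (conjugate f) f → Bad false (ofPart n f)) := by
  have hs := isSt_ofPart hf
  have hanti : ∀ c i j, i ≤ j → j < (ofPart n f).1 → (ofPart n f).2 c j ≤ (ofPart n f).2 c i := by
    intro c i j hij hj
    have := hs.add_le c hij hj
    omega
  have h1 : ∀ k ≤ (ofPart n f).1, ∑ i ∈ range k, (ofPart n f).2 true i =
      (∑ i ∈ range k, f i : ℕ) - ∑ i ∈ range k, ((i : ℤ) + 1) := by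
    intro k hk
    push_cast
    rw [← sum_sub_distrib]
    apply sum_congr rfl
    intro i hi
    rw [ofPart_true (by simp at hi; omega)]
    ring
  have h2 : ∀ k ≤ (ofPart n f).1, ∑ i ∈ range k, (ofPart n f).2 false i =
      (∑ i ∈ range k, conjugate f i : ℕ) - ∑ i ∈ range k, ((i : ℤ) + 1) := by
    intro k hk
    push_cast
    rw [← sum_sub_distrib]
    apply sum_congr rfl
    intro i hi
    rw [ofPart_false (by simp at hi; omega)]
    ring
  constructor
  · intro h t
    apply sum_max_le (hanti true)
    intro k hk
    rw [Bool.not_true, h1 k hk, h2 k hk]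
    have := h k
    omega
  · intro h t
    apply sum_max_le (hanti false)
    intro k hk
    rw [Bool.not_false, h1 k hk, h2 k hk]
    have := h k
    omega

/-! ### Local moves and rare events -/

/-- `UpperFreq P a` says that asymptotically at most the proportion `a` of all Frobenius
coordinates of partitions of `n` satisfy `P`. -/
def UpperFreq (P : State → Prop) (a : ℝ) : Prop :=
  ∀ η : ℝ, 0 < η → ∀ᶠ n : ℕ in Filter.atTop,
    (({s ∈ (St n : Set State) | P s}.ncard : ℕ) : ℝ) ≤ (a + η) * #(St n)

theorem ncard_sep_eq (n : ℕ) (P : State → Prop) [DecidablePred P] :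
    {s ∈ (St n : Set State) | P s}.ncard = #{s ∈ St n | P s} := by
  rw [← Set.ncard_coe_finset]
  congr 1
  ext s
  simp

theorem UpperFreq.mono {P Q : State → Prop} {a b : ℝ} (h : UpperFreq P a) (hab : a ≤ b)
    (hQ : ∀ n s, IsSt n s → Q s → P s) : UpperFreq Q b := by
  intro η hη
  filter_upwards [h η hη] with n hn
  have h1 : {s ∈ (St n : Set State) | Q s}.ncard ≤ {s ∈ (St n : Set State) | P s}.ncard := by
    apply Set.ncard_le_ncard
    · rintro s ⟨hs, hq⟩
      exact ⟨hs, hQ n s (mem_St.1 hs) hq⟩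
    · exact (St n).finite_toSet.subset (Set.sep_subset _ _)
  calc (_ : ℝ) ≤ {s ∈ (St n : Set State) | P s}.ncard := by exact_mod_cast h1
    _ ≤ _ := hn
    _ ≤ _ := by gcongr

theorem UpperFreq.or {P Q : State → Prop} {a b : ℝ} (hP : UpperFreq P a) (hQ : UpperFreq Q b) :
    UpperFreq (fun s => P s ∨ Q s) (a + b) := by
  intro η hη
  filter_upwards [hP (η / 2) (by linarith), hQ (η / 2) (by linarith)] with n h1 h2
  have h3 : {s ∈ (St n : Set State) | P s ∨ Q s}.ncard ≤
      {s ∈ (St n : Set State) | P s}.ncard + {s ∈ (St n : Set State) | Q s}.ncard := by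
    rw [Set.sep_or]
    exact Set.ncard_union_le _ _
  have h4 : ({s ∈ (St n : Set State) | P s ∨ Q s}.ncard : ℝ) ≤
      {s ∈ (St n : Set State) | P s}.ncard + {s ∈ (St n : Set State) | Q s}.ncard := by
    exact_mod_cast h3
  linarith

theorem UpperFreq.exists_finset {ι : Type*} (I : Finset ι) {P : ι → State → Prop} {a : ι → ℝ}
    (h : ∀ i ∈ I, UpperFreq (P i) (a i)) :
    UpperFreq (fun s => ∃ i ∈ I, P i s) (∑ i ∈ I, a i) := by
  classical
  induction I using Finset.induction_on with
  | empty =>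
    intro η hη
    filter_upwards with n
    simp
    positivity
  | insert i I hi ih =>
    rw [sum_insert hi]
    refine ((h i (mem_insert_self _ _)).or
      (ih fun j hj => h j (mem_insert_of_mem hj))).mono le_rfl ?_
    rintro n s _ ⟨j, hj, hp⟩
    rcases mem_insert.1 hj with rfl | hj
    · exact Or.inl hp
    · exact Or.inr ⟨j, hj, hp⟩

theorem UpperFreq.of_le {P : State → Prop} {a : ℝ}
    (h : ∀ η : ℝ, 0 < η → UpperFreq P (a + η)) : UpperFreq P a := by
  intro η hη
  filter_upwards [h (η / 2) (by linarith) (η / 2) (by linarith)] with n hn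
  convert hn using 2
  ring

/-- An event is asymptotically at most `1 / K` likely if every state in it has `K` images, the
images of all these states being distinct. -/
theorem upperFreq_of_inj {P : State → Prop} {K : ℕ} (hK : 0 < K) (Φ : State → ℕ → State)
    (hΦ : ∀ (n : ℕ) s k, IsSt n s → P s → k < K → IsSt n (Φ s k))
    (hinj : ∀ (n : ℕ) s s' k k', IsSt n s → IsSt n s' → P s → P s' → k < K → k' < K →
      Φ s k = Φ s' k' → s = s' ∧ k = k') : UpperFreq P (1 / K) := by
  classical
  intro η hη
  filter_upwards with n
  rw [ncard_sep_eq]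
  have h1 : #({s ∈ St n | P s} ×ˢ range K) ≤ #(St n) := by
    apply card_le_card_of_injOn (fun z => Φ z.1 z.2)
    · rintro ⟨s, k⟩ hz
      simp only [Finset.mem_coe, mem_product, mem_filter, mem_St, mem_range] at *
      exact hΦ n s k hz.1.1 hz.1.2 hz.2
    · rintro ⟨s, k⟩ hz ⟨s', k'⟩ hz' h
      simp only [Finset.mem_coe, mem_product, mem_filter, mem_St, mem_range] at *
      obtain ⟨h1, h2⟩ := hinj n s s' k k' hz.1.1 hz'.1.1 hz.1.2 hz'.1.2 hz.2 hz'.2 h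
      rw [h1, h2]
  rw [card_product, card_range] at h1
  have h2 : (#{s ∈ St n | P s} : ℝ) * K ≤ #(St n) := by exact_mod_cast h1
  have hK' : (0 : ℝ) < K := by exact_mod_cast hK
  calc (#{s ∈ St n | P s} : ℝ) ≤ #(St n) / K := by rwa [le_div_iff₀ hK']
    _ = 1 / K * #(St n) := by ring
    _ ≤ _ := by gcongr; linarith

theorem upperFreq_durfee_le (J : ℕ) : UpperFreq (fun s => s.1 ≤ J) 0 := by
  classical
  intro η hη
  have h1 := card_par_add_le ((J + 1) * (J + 1)) η hη
  obtain ⟨N, hN⟩ := Filter.eventually_atTop.1 h1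
  filter_upwards [Filter.eventually_ge_atTop (N + (J + 1) * (J + 1))] with n hn
  obtain ⟨m, rfl⟩ : ∃ m, n = m + (J + 1) * (J + 1) := ⟨n - (J + 1) * (J + 1), by omega⟩
  have h2 := hN m (by omega)
  have h3 := card_par_row_lt m J (J + 1)
  rw [ncard_sep_eq, card_St]
  set n := m + (J + 1) * (J + 1)
  have h4 : #{s ∈ St n | s.1 ≤ J} ≤ #{f ∈ Par n | f J < J + 1} := by
    apply card_le_card_of_injOn (fun s => toPart s true)
    · intro s hs
      simp only [Finset.mem_coe, mem_filter, mem_St, mem_Par] at *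
      refine ⟨isPartitionOf_toPart hs.1, ?_⟩
      have := toPart_le (c := true) hs.2
      omega
    · intro s hs t ht h
      simp only [Finset.mem_coe, mem_filter, mem_St] at *
      exact toPart_injOn n hs.1 ht.1 h
  have h5 : (#(Par m) : ℝ) + #{s ∈ St n | s.1 ≤ J} ≤ #(Par n) := by
    exact_mod_cast (Nat.add_le_add_left h4 _).trans h3
  linarith

/-- The `l`-th gap of the `c`-coloured sequence, normalised to be nonnegative. -/
def gap (s : State) (c : Bool) (l : ℕ) : ℤ := s.2 c l - s.2 c (l + 1) - 1

/-- Shift the `l + 1` largest terms of the `c`-coloured sequence by `δ`. -/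
def shift (s : State) (c : Bool) (l : ℕ) (δ : ℤ) : State :=
  (s.1, fun c' i => s.2 c' i + if c' = c ∧ i ≤ l then δ else 0)

theorem shift_fst (s : State) (c : Bool) (l : ℕ) (δ : ℤ) : (shift s c l δ).1 = s.1 := rfl

theorem IsSt.gap_nonneg {m : ℤ} {s : State} (h : IsSt m s) (c : Bool) {l : ℕ}
    (hl : l + 1 < s.1) : 0 ≤ gap s c l := by
  have := h.2.1 c l hl
  unfold gap; omega

theorem gap_shift_self (s : State) (c : Bool) (l : ℕ) (δ : ℤ) :
    gap (shift s c l δ) c l = gap s c l + δ := by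
  unfold gap shift
  simp
  ring

theorem gap_shift_of_ne (s : State) {c c' : Bool} {l l' : ℕ} (δ : ℤ) (h : (c', l') ≠ (c, l)) :
    gap (shift s c l δ) c' l' = gap s c' l' := by
  unfold gap shift
  by_cases hc : c' = c
  · subst hc
    have hl : l' ≠ l := fun h' => h (by rw [h'])
    have : l' ≤ l ↔ l' + 1 ≤ l := by omega
    simp [this]
  · simp [hc]

theorem shift_injective (c : Bool) (l : ℕ) (δ : ℤ) {s t : State}
    (h : shift s c l δ = shift t c l δ) : s = t := by
  have h1 : (shift s c l δ).1 = (shift t c l δ).1 := by rw [h]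
  refine Prod.ext h1 ?_
  funext c' i
  have := congrFun (congrFun (congrArg Prod.snd h) c') i
  unfold shift at this
  exact add_right_cancel this

theorem sum_range_indicator {d l : ℕ} (hl : l < d) (δ : ℤ) :
    ∑ i ∈ range d, (if i ≤ l then δ else 0) = (l + 1) * δ := by
  rw [← sum_filter]
  have : {i ∈ range d | i ≤ l} = range (l + 1) := by
    ext i; simp; omega
  rw [this]
  simp

theorem isSt_shift {m : ℤ} {s : State} (h : IsSt m s) {c : Bool} {l : ℕ} {δ : ℤ}
    (hl : l + 1 < s.1) (hδ : 0 ≤ gap s c l + δ) : IsSt (m + (l + 1) * δ) (shift s c l δ) := by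
  unfold gap at hδ
  have hlast := h.2.2.1 c (l + 1) hl
  refine ⟨?_, ?_, ?_, ?_⟩
  · intro c' i hi
    simp only [shift] at *
    rw [h.1 c' i hi, if_neg (by omega), add_zero]
  · intro c' i hi
    simp only [shift] at *
    have h1 := h.2.1 c' i hi
    by_cases hc : c' = c
    · subst hc
      rcases lt_trichotomy i l with h2 | h2 | h2
      · rw [if_pos ⟨rfl, by omega⟩, if_pos ⟨rfl, by omega⟩]; omega
      · subst h2
        rw [if_neg (by omega), if_pos ⟨rfl, le_rfl⟩]; omega
      · rw [if_neg (by omega), if_neg (by omega)]; omega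
    · rw [if_neg (by simp [hc]), if_neg (by simp [hc])]; omega
  · intro c' i hi
    simp only [shift] at *
    have h1 := h.2.2.1 c' i hi
    by_cases hc : c' = c ∧ i ≤ l
    · obtain ⟨rfl, hil⟩ := hc
      have h2 := h.add_le c' hil (by omega)
      rw [if_pos ⟨rfl, hil⟩]
      omega
    · rw [if_neg hc]; omega
  · rw [← h.2.2.2, ← sum_range_indicator (by omega : l < s.1) δ, ← sum_add_distrib]
    apply sum_congr rfl
    intro i hi
    simp only [shift]
    cases c <;> simp <;> ring

theorem upperFreq_gap_lt (c : Bool) (l B : ℕ) :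
    UpperFreq (fun s => l + 1 < s.1 ∧ gap s c l < B) 0 := by
  classical
  intro η hη
  have h1 := card_par_add_le ((l + 1) * B) (η / 2) (by linarith)
  have h1' := upperFreq_durfee_le (l + 1) (η / 2) (by linarith)
  obtain ⟨N, hN⟩ := Filter.eventually_atTop.1 (h1.and h1')
  filter_upwards [Filter.eventually_ge_atTop (N + (l + 1) * B)] with n hn
  obtain ⟨m, rfl⟩ : ∃ m, n = m + (l + 1) * B := ⟨n - (l + 1) * B, by omega⟩
  obtain ⟨h2, h3⟩ := hN m (by omega)
  rw [ncard_sep_eq] at *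
  have h4 : #{s ∈ St m | ¬ s.1 ≤ l + 1} ≤
      #{s ∈ St (m + (l + 1) * B) | ¬ (l + 1 < s.1 ∧ gap s c l < B)} := by
    apply card_le_card_of_injOn (fun s => shift s c l B)
    · intro s hs
      simp only [Finset.mem_coe, mem_filter, mem_St] at *
      have h5 := hs.1.gap_nonneg c (by omega : l + 1 < s.1)
      refine ⟨?_, ?_⟩
      · have := isSt_shift (c := c) (δ := B) hs.1 (by omega : l + 1 < s.1) (by omega)
        exact_mod_cast this
      · rw [gap_shift_self]
        omega
    · intro s _ t _ h
      exact shift_injective _ _ _ h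
  have h5 := card_filter_add_card_filter_not (s := St m) (fun s => s.1 ≤ l + 1)
  have h6 := card_filter_add_card_filter_not (s := St (m + (l + 1) * B))
    (fun s => l + 1 < s.1 ∧ gap s c l < B)
  have h7 := par_mono (by omega : m ≤ m + (l + 1) * B)
  rw [← card_St, ← card_St] at h2 h7
  rify at *
  nlinarith

/-- Move weight `(i + 1) * (l + 1) * τ` from the gap `(c', l)` to the gap `(c, i)`; the size of
the partition does not change. -/
def transfer (s : State) (c : Bool) (i : ℕ) (c' : Bool) (l : ℕ) (τ : ℤ) : State :=
  shift (shift s c i (τ * (l + 1))) c' l (-(τ * (i + 1)))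

theorem transfer_injective {c : Bool} {i : ℕ} {c' : Bool} {l : ℕ} {τ : ℤ} {s t : State}
    (h : transfer s c i c' l τ = transfer t c i c' l τ) : s = t :=
  shift_injective _ _ _ (shift_injective _ _ _ h)

theorem isSt_transfer {m : ℤ} {s : State} (h : IsSt m s) {c : Bool} {i : ℕ} {c' : Bool} {l : ℕ}
    {τ : ℤ} (hne : (c', l) ≠ (c, i)) (hi : i + 1 < s.1) (hl : l + 1 < s.1) (h0 : 0 ≤ τ)
    (hτ : τ * (i + 1) ≤ gap s c' l) : IsSt m (transfer s c i c' l τ) := by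
  have h1 := h.gap_nonneg c hi
  have h2 := isSt_shift h (c := c) (δ := τ * (l + 1)) hi (by positivity)
  have h3 := isSt_shift h2 (c := c') (l := l) (δ := -(τ * (i + 1))) hl
    (by rw [gap_shift_of_ne _ _ hne]; linarith)
  unfold transfer
  convert h3 using 1
  ring

theorem gap_transfer (s : State) {c : Bool} {i : ℕ} {c' : Bool} {l : ℕ} (τ : ℤ)
    (hne : (c', l) ≠ (c, i)) : gap (transfer s c i c' l τ) c i = gap s c i + τ * (l + 1) := by
  unfold transfer
  rw [gap_shift_of_ne _ _ hne.symm, gap_shift_self]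

/-- For fixed `i` and `k`, an arm of index `i` rarely equals the leg of index `k`: a coincidence can
be resolved in many ways by transferring weight from the gap `(false, k)`, and the difference of the
two coordinates tells how much was transferred. -/
theorem upperFreq_coincidence (i k : ℕ) :
    UpperFreq (fun s => (i + 1 < s.1 ∧ k + 1 < s.1) ∧ s.2 true i = s.2 false k) 0 := by
  apply UpperFreq.of_le
  intro η hη
  obtain ⟨K, hK⟩ := exists_nat_one_div_lt hη
  have h1 : UpperFreq (fun s => (i + 1 < s.1 ∧ k + 1 < s.1) ∧ s.2 true i = s.2 false k ∧
      (K : ℤ) * (i + 1) ≤ gap s false k) (1 / (K + 1 : ℕ)) := by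
    have hval : ∀ (s : State) (τ : ℤ), (transfer s true i false k τ).2 true i -
        (transfer s true i false k τ).2 false k =
        s.2 true i - s.2 false k + τ * (i + k + 2) := by
      intro s τ
      simp [transfer, shift]
      ring
    apply upperFreq_of_inj (by omega) (fun s τ => transfer s true i false k τ)
    · rintro n s τ hs ⟨⟨hi, hk⟩, he, hg⟩ hτ
      apply isSt_transfer hs (by simp) hi hk (by positivity)
      refine le_trans ?_ hg
      have : (τ : ℤ) ≤ K := by omega
      gcongr
    · rintro n s s' τ τ' _ _ ⟨_, he, _⟩ ⟨_, he', _⟩ _ _ h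
      have h2 := hval s τ
      have h3 := hval s' τ'
      rw [h, h3, he, he'] at h2
      have h4 : (τ : ℤ) = τ' := by
        have : (0 : ℤ) < i + k + 2 := by positivity
        apply mul_right_cancel₀ this.ne'
        linarith
      have h5 : τ = τ' := by exact_mod_cast h4
      subst h5
      exact ⟨transfer_injective h, rfl⟩
  refine (h1.or (upperFreq_gap_lt false k (K * (i + 1)))).mono (b := 0 + η) ?_ ?_
  · push_cast; linarith
  · rintro n s _ ⟨hd, he⟩
    by_cases h : (K : ℤ) * (i + 1) ≤ gap s false k
    · exact Or.inl ⟨hd, he, h⟩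
    · refine Or.inr ⟨hd.2, ?_⟩
      push_cast
      omega

/-- It is unlikely that one weighted gap is much smaller than another one. -/
theorem upperFreq_gap_small {c c' : Bool} {i l : ℕ} (hne : (c', l) ≠ (c, i)) {K : ℕ}
    (hK : 0 < K) : UpperFreq (fun s => (i + 1 < s.1 ∧ l + 1 < s.1) ∧
      2 * K * (i + 1) * gap s c i ≤ (l + 1) * gap s c' l) (1 / K) := by
  have h1 : UpperFreq (fun s => ((i + 1 < s.1 ∧ l + 1 < s.1) ∧
      2 * K * (i + 1) * gap s c i ≤ (l + 1) * gap s c' l) ∧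
      (2 * K * (i + 1) : ℤ) ≤ gap s c' l) (1 / K) := by
    have hl0 : (0 : ℤ) < l + 1 := by positivity
    have hval : ∀ (s : State) (k : ℕ), gap (transfer s c i c' l
        ((K - 1) * (gap s c i / (l + 1)) + k)) c i / (l + 1) = K * (gap s c i / (l + 1)) + k := by
      intro s k
      rw [gap_transfer _ _ hne, Int.add_mul_ediv_right _ _ hl0.ne']
      ring
    -- The transferred amount multiplies the quotient `gap s c i / (l + 1)` by `K` and adds `k`, so
    -- that `k` is recovered as a remainder modulo `K`.
    apply upperFreq_of_inj hK
      (fun s k => transfer s c i c' l ((K - 1) * (gap s c i / (l + 1)) + k))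
    · rintro n s k hs ⟨⟨⟨hi, hl⟩, hg⟩, hB⟩ hk
      have h0 := hs.gap_nonneg c hi
      have h2 : 0 ≤ gap s c i / ((l : ℤ) + 1) := Int.ediv_nonneg h0 hl0.le
      have h3 : gap s c i / ((l : ℤ) + 1) * (l + 1) ≤ gap s c i := Int.ediv_mul_le _ hl0.ne'
      set τ := gap s c i / ((l : ℤ) + 1)
      have hK1 : (0 : ℤ) ≤ K - 1 := by omega
      have h4 : 2 * K * (i + 1) * τ ≤ gap s c' l := by
        refine le_of_mul_le_mul_left ?_ hl0
        calc ((l : ℤ) + 1) * (2 * K * (i + 1) * τ) = 2 * K * (i + 1) * (τ * (l + 1)) := by ring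
          _ ≤ 2 * K * (i + 1) * gap s c i := by gcongr
          _ ≤ _ := hg
      apply isSt_transfer hs hne hi hl (by positivity)
      have h5 : (k : ℤ) * (i + 1) ≤ K * (i + 1) := by
        have : (k : ℤ) ≤ K := by omega
        gcongr
      have h6 : 0 ≤ τ * (i + 1) := by positivity
      nlinarith
    · rintro n s s' k k' hs hs' - - hk hk' h
      have h2 := hval s k
      have h3 := hval s' k'
      rw [h, h3] at h2
      have hKk : ∀ (z : ℤ) (k : ℕ), k < K → (K * z + k) % K = k := by
        intro z k hk
        rw [Int.mul_add_emod_self_left]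
        exact Int.emod_eq_of_lt (by positivity) (by exact_mod_cast hk)
      have h4 := hKk (gap s c i / (l + 1)) k hk
      rw [← h2, hKk _ k' hk'] at h4
      have h5 : k = k' := by exact_mod_cast h4.symm
      subst h5
      have h6 : gap s c i / ((l : ℤ) + 1) = gap s' c i / (l + 1) := by
        apply mul_left_cancel₀ (by exact_mod_cast hK.ne' : (K : ℤ) ≠ 0)
        linarith
      rw [h6] at h
      exact ⟨transfer_injective h, rfl⟩
  refine (h1.or (upperFreq_gap_lt c' l (2 * K * (i + 1)))).mono (by simp) ?_
  rintro n s _ ⟨hd, he⟩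
  by_cases h : (2 * K * (i + 1) : ℤ) ≤ gap s c' l
  · exact Or.inl ⟨⟨hd, he⟩, h⟩
  · refine Or.inr ⟨hd.2, ?_⟩
    push_cast
    omega

/-! ### Growth of the span of the largest coordinates -/

theorem UpperFreq.markov {P : State → Prop} {Q : ℕ → State → Prop} {a : ℝ} {I : Finset ℕ}
    {w : ℕ → ℝ} (hw : ∀ i ∈ I, 0 ≤ w i) (hW : 0 < ∑ i ∈ I, w i)
    (hQ : ∀ i ∈ I, UpperFreq (Q i) a)
    (hP : ∀ (n : ℕ) s, IsSt n s → P s →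
      ∃ I' ⊆ I, (∀ i ∈ I', Q i s) ∧ ∑ i ∈ I, w i ≤ 2 * ∑ i ∈ I', w i) : UpperFreq P (2 * a) := by
  classical
  intro η hη
  have h1 := (Finset.eventually_all I).2 (fun i hi => hQ i hi (η / 2) (by linarith))
  filter_upwards [h1] with n hn
  rw [ncard_sep_eq]
  have h2 : ∀ i ∈ I, (#{s ∈ St n | Q i s} : ℝ) ≤ (a + η / 2) * #(St n) := by
    intro i hi
    rw [← ncard_sep_eq]
    exact hn i hi
  set W := ∑ i ∈ I, w i with hWdef
  have h3 : (#{s ∈ St n | P s} : ℝ) * W ≤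
      ∑ s ∈ St n, 2 * ∑ i ∈ I, if Q i s then w i else 0 := by
    rw [← nsmul_eq_mul, ← sum_const]
    refine (sum_le_sum (g := fun s => 2 * ∑ i ∈ I, if Q i s then w i else 0) ?_).trans
      (sum_le_sum_of_subset_of_nonneg (filter_subset _ _) ?_)
    · intro s hs
      rw [mem_filter, mem_St] at hs
      obtain ⟨I', hI, hq, hle⟩ := hP n s hs.1 hs.2
      refine hle.trans ?_
      gcongr
      rw [← sum_filter]
      apply sum_le_sum_of_subset_of_nonneg
      · intro i hi
        exact mem_filter.2 ⟨hI hi, hq i hi⟩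
      · intro i hi _
        exact hw i (mem_filter.1 hi).1
    · intro s _ _
      refine mul_nonneg (by norm_num) (sum_nonneg fun i hi => ?_)
      split_ifs
      · exact hw i hi
      · exact le_rfl
  have h4 : ∑ s ∈ St n, 2 * ∑ i ∈ I, (if Q i s then w i else 0) ≤
      (2 * a + η) * #(St n) * W := by
    rw [← mul_sum, sum_comm, hWdef, mul_sum, mul_sum]
    apply sum_le_sum
    intro i hi
    rw [← sum_filter, sum_const, nsmul_eq_mul]
    have := mul_le_mul_of_nonneg_right (h2 i hi) (hw i hi)
    nlinarith
  exact le_of_mul_le_mul_right (h3.trans h4) hW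

theorem sum_gap (s : State) (c : Bool) (j : ℕ) :
    ∑ i ∈ range j, (gap s c i + 1) = s.2 c 0 - s.2 c j := by
  induction j with
  | zero => simp
  | succ j ih => rw [sum_range_succ, ih]; unfold gap; ring

/-- Among many weighted gaps, few are much smaller than the weighted gap `(c', l)`. As the
harmonic series diverges, the sum of the gaps is therefore large compared to the gap `(c', l)`. -/
theorem upperFreq_sum_gap_lt {c c' : Bool} {j l J K : ℕ} (hl : l < j) (hK : 0 < K)
    (hJ : (16 * j * K : ℝ) ≤ ∑ i ∈ Ico j J, (1 / (i + 1) : ℝ)) :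
    UpperFreq (fun s => J + 1 < s.1 ∧ 1 ≤ gap s c' l ∧
      ∑ i ∈ Ico j J, gap s c i < 4 * j * gap s c' l) (2 * (1 / K)) := by
  classical
  have hj0 : (0 : ℝ) < j := by exact_mod_cast (by omega : 0 < j)
  have hK0 : (0 : ℝ) < K := by exact_mod_cast hK
  apply UpperFreq.markov (I := Ico j J) (w := fun i => (1 / (i + 1) : ℝ))
    (Q := fun i s => (i + 1 < s.1 ∧ l + 1 < s.1) ∧
      2 * K * (i + 1) * gap s c i ≤ (l + 1) * gap s c' l)
  · intro i _
    positivity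
  · exact lt_of_lt_of_le (by positivity) hJ
  · intro i hi
    apply upperFreq_gap_small _ hK
    intro h
    have h1 := (Prod.ext_iff.1 h).2
    simp at hi h1
    omega
  · rintro n s hs ⟨hd, h1, hlt⟩
    refine ⟨{i ∈ Ico j J | 2 * K * (i + 1) * gap s c i ≤ (l + 1) * gap s c' l},
      filter_subset _ _, ?_, ?_⟩
    · intro i hi
      simp only [mem_filter, mem_Ico] at hi
      exact ⟨⟨by omega, by omega⟩, hi.2⟩
    · rw [← sum_filter_add_sum_filter_not (Ico j J)
        (fun i : ℕ => 2 * K * (i + 1) * gap s c i ≤ (l + 1) * gap s c' l)] at hJ ⊢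
      have hg0 : (0 : ℝ) < gap s c' l := by exact_mod_cast h1
      have h2 : (∑ i ∈ (Ico j J).filter
          (fun i : ℕ => ¬ 2 * K * ((i : ℤ) + 1) * gap s c i ≤ (l + 1) * gap s c' l),
          (1 / (i + 1) : ℝ)) * (gap s c' l / (2 * K)) ≤ 4 * j * gap s c' l := by
        have h3 : (∑ i ∈ Ico j J, gap s c i : ℝ) ≤ 4 * j * gap s c' l := by
          exact_mod_cast hlt.le
        refine le_trans ?_ h3
        rw [sum_mul, ← sum_filter_add_sum_filter_not (Ico j J)
          (fun i : ℕ => 2 * K * ((i : ℤ) + 1) * gap s c i ≤ (l + 1) * gap s c' l)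
          (fun i => (gap s c i : ℝ))]
        refine le_trans (sum_le_sum (g := fun i => (gap s c i : ℝ)) ?_)
          (le_add_of_nonneg_left (sum_nonneg ?_))
        · intro i hi
          simp only [mem_filter, mem_Ico, not_le] at hi
          have h4 : ((l : ℝ) + 1) * gap s c' l ≤ 2 * K * (i + 1) * gap s c i := by
            exact_mod_cast hi.2.le
          have h5 : (gap s c' l : ℝ) ≤ (l + 1) * gap s c' l := by
            have : (0 : ℝ) ≤ l := by positivity
            nlinarith
          rw [div_mul_div_comm, one_mul, div_le_iff₀ (by positivity)]
          nlinarith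
        · intro i hi
          simp only [mem_filter, mem_Ico] at hi
          exact_mod_cast hs.gap_nonneg c (by omega)
      have h6 : (∑ i ∈ (Ico j J).filter
          (fun i : ℕ => ¬ 2 * K * ((i : ℤ) + 1) * gap s c i ≤ (l + 1) * gap s c' l),
          (1 / (i + 1) : ℝ)) ≤ 8 * j * K := by
        rw [mul_div_assoc', div_le_iff₀ (by positivity)] at h2
        refine le_of_mul_le_mul_right ?_ hg0
        linarith
      linarith

/-- For `J` large compared to `j`, the span of the `J + 1` largest coordinates of one colour is
typically at least twice the span of the `j + 1` largest coordinates of any colour. -/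
theorem exists_doubling {j : ℕ} (hj : 0 < j) {η : ℝ} (hη : 0 < η) :
    ∃ J > j, ∀ c c', UpperFreq (fun s => J + 1 < s.1 ∧
      s.2 c 0 - s.2 c J < 2 * (s.2 c' 0 - s.2 c' j)) η := by
  obtain ⟨K, hK⟩ := exists_nat_gt (2 * j / η)
  have hj0 : (0 : ℝ) < j := by exact_mod_cast hj
  have hK0 : (0 : ℝ) < K := lt_trans (by positivity) hK
  have hK1 : 0 < K := by exact_mod_cast hK0
  have hdiv := Real.tendsto_sum_range_one_div_nat_succ_atTop.eventually_ge_atTop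
    (16 * j * K + ∑ i ∈ range j, (1 / (i + 1) : ℝ))
  obtain ⟨J, hJ, hJj⟩ := (hdiv.and (Filter.eventually_gt_atTop j)).exists
  refine ⟨J, hJj, fun c c' => ?_⟩
  have hH : (16 * j * K : ℝ) ≤ ∑ i ∈ Ico j J, (1 / (i + 1) : ℝ) := by
    rw [sum_Ico_eq_sub _ hJj.le]
    linarith
  have h1 := UpperFreq.exists_finset (range j) (fun l hl => upperFreq_sum_gap_lt (c := c)
    (c' := c') (mem_range.1 hl) hK1 hH)
  have h2 := UpperFreq.exists_finset (range j) (fun l _ => upperFreq_gap_lt c' l 1)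
  refine (h1.or h2).mono ?_ ?_
  · simp only [sum_const, card_range, nsmul_eq_mul, mul_zero, add_zero]
    rw [div_lt_iff₀ hη] at hK
    rw [mul_one_div, mul_div_assoc', div_le_iff₀ hK0]
    linarith
  · rintro n s hs ⟨hd, hlt⟩
    by_contra hcon
    rw [not_or] at hcon
    push Not at hcon
    obtain ⟨hA, hB⟩ := hcon
    have hB' : ∀ l ∈ range j, 1 ≤ gap s c' l := by
      intro l hl
      have := hB l hl (by simp at hl; omega)
      simpa using this
    have h3 : ∀ l ∈ range j, 2 * j * (gap s c' l + 1) ≤ ∑ i ∈ Ico j J, gap s c i := by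
      intro l hl
      have h4 := hA l hl hd (hB' l hl)
      have h5 := hB' l hl
      have : (0 : ℤ) < j := by exact_mod_cast hj
      nlinarith
    have h6 := sum_le_sum h3
    rw [← mul_sum, sum_gap, sum_const, card_range, nsmul_eq_mul] at h6
    have h7 : 2 * (s.2 c' 0 - s.2 c' j) ≤ ∑ i ∈ Ico j J, gap s c i := by
      have : (0 : ℤ) < j := by exact_mod_cast hj
      refine le_of_mul_le_mul_left ?_ this
      linarith
    have h8 : ∑ i ∈ Ico j J, gap s c i ≤ ∑ i ∈ range J, (gap s c i + 1) := by
      refine (sum_le_sum (g := fun i => gap s c i + 1) fun i _ => by omega).trans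
        (sum_le_sum_of_subset_of_nonneg ?_ ?_)
      · intro i; simp
      · intro i hi _
        have := hs.gap_nonneg c (l := i) (by simp at hi; omega)
        omega
    rw [sum_gap] at h8
    omega

/-! ### Random signs -/

/-- The sum of `h` over `Z` with positive signs on `S` and negative signs elsewhere. -/
def signedSum (Z : Finset ℤ) (h : ℤ → ℤ) (S : Finset ℤ) : ℤ :=
  ∑ x ∈ Z, if x ∈ S then h x else -h x

theorem signedSum_insert {Z : Finset ℤ} {a : ℤ} (ha : a ∉ Z) (h : ℤ → ℤ) {S : Finset ℤ}
    (hS : S ⊆ Z) : signedSum (insert a Z) h S = -h a + signedSum Z h S ∧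
      signedSum (insert a Z) h (insert a S) = h a + signedSum Z h S := by
  have haS : a ∉ S := fun h => ha (hS h)
  unfold signedSum
  rw [sum_insert ha, sum_insert ha]
  refine ⟨by simp [haS], ?_⟩
  rw [if_pos (mem_insert_self _ _)]
  congr 1
  apply sum_congr rfl
  intro x hx
  have : x ≠ a := fun h => ha (h ▸ hx)
  simp [this]

theorem sum_signedSum_sq (Z : Finset ℤ) (h : ℤ → ℤ) (y : ℤ) :
    ∑ S ∈ Z.powerset, (y + signedSum Z h S) ^ 2 = 2 ^ #Z * (y ^ 2 + ∑ x ∈ Z, h x ^ 2) := by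
  induction Z using Finset.induction_on generalizing y with
  | empty => simp [signedSum]
  | insert a Z ha ih =>
    rw [sum_powerset_insert ha, sum_insert ha, card_insert_of_notMem ha]
    have h1 : ∑ S ∈ Z.powerset, (y + signedSum (insert a Z) h S) ^ 2 =
        ∑ S ∈ Z.powerset, ((y - h a) + signedSum Z h S) ^ 2 := by
      apply sum_congr rfl
      intro S hS
      rw [(signedSum_insert ha h (mem_powerset.1 hS)).1]; ring
    have h2 : ∑ S ∈ Z.powerset, (y + signedSum (insert a Z) h (insert a S)) ^ 2 =
        ∑ S ∈ Z.powerset, ((y + h a) + signedSum Z h S) ^ 2 := by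
      apply sum_congr rfl
      intro S hS
      rw [(signedSum_insert ha h (mem_powerset.1 hS)).2]; ring
    rw [h1, h2, ih, ih]
    ring

theorem sum_signedSum_pow_four (Z : Finset ℤ) (h : ℤ → ℤ) (y : ℤ) :
    ∑ S ∈ Z.powerset, (y + signedSum Z h S) ^ 4 ≤
      2 ^ #Z * (y ^ 4 + 6 * y ^ 2 * ∑ x ∈ Z, h x ^ 2 + 3 * (∑ x ∈ Z, h x ^ 2) ^ 2) := by
  induction Z using Finset.induction_on generalizing y with
  | empty => simp [signedSum]
  | insert a Z ha ih =>
    rw [sum_powerset_insert ha, sum_insert ha, card_insert_of_notMem ha]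
    have h1 : ∑ S ∈ Z.powerset, (y + signedSum (insert a Z) h S) ^ 4 =
        ∑ S ∈ Z.powerset, ((y - h a) + signedSum Z h S) ^ 4 := by
      apply sum_congr rfl
      intro S hS
      rw [(signedSum_insert ha h (mem_powerset.1 hS)).1]; ring
    have h2 : ∑ S ∈ Z.powerset, (y + signedSum (insert a Z) h (insert a S)) ^ 4 =
        ∑ S ∈ Z.powerset, ((y + h a) + signedSum Z h S) ^ 4 := by
      apply sum_congr rfl
      intro S hS
      rw [(signedSum_insert ha h (mem_powerset.1 hS)).2]; ring
    rw [h1, h2]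
    refine (add_le_add (ih _) (ih _)).trans ?_
    set V := ∑ x ∈ Z, h x ^ 2
    rw [← mul_add, pow_succ (2 : ℤ) (#Z), mul_assoc (2 ^ #Z) 2]
    refine mul_le_mul_of_nonneg_left ?_ (pow_nonneg zero_le_two _)
    nlinarith [sq_nonneg (h a ^ 2)]

theorem signedSum_sdiff (Z : Finset ℤ) (h : ℤ → ℤ) (S : Finset ℤ) :
    signedSum Z h (Z \ S) = -signedSum Z h S := by
  unfold signedSum
  rw [← sum_neg_distrib]
  apply sum_congr rfl
  intro x hx
  by_cases hS : x ∈ S <;> simp [hx, hS]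

/-- Anticoncentration: a random signed sum exceeds a fraction of its standard deviation with
probability at least `1 / 24`, by comparing its second and fourth moments. -/
theorem signedSum_anticoncentration {Z : Finset ℤ} {h : ℤ → ℤ} {θ : ℤ}
    (hV : 2 * θ ^ 2 < ∑ x ∈ Z, h x ^ 2) :
    2 ^ #Z ≤ 24 * #{S ∈ Z.powerset | θ < signedSum Z h S} := by
  have m2 := sum_signedSum_sq Z h 0
  have m4 := sum_signedSum_pow_four Z h 0
  set V := ∑ x ∈ Z, h x ^ 2 with hVdef
  simp only [zero_add] at m2 m4
  have hV0 : 0 < V := lt_of_le_of_lt (by positivity) hV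
  have h1 : 2 ^ #Z * (3 * V ^ 2) ≤
      36 * V ^ 2 * (#{S ∈ Z.powerset | V < 2 * signedSum Z h S ^ 2} : ℤ) := by
    have h2 : ∑ S ∈ Z.powerset, (12 * V * signedSum Z h S ^ 2 - signedSum Z h S ^ 4 - 6 * V ^ 2) ≤
        ∑ S ∈ Z.powerset, if V < 2 * signedSum Z h S ^ 2 then 36 * V ^ 2 else 0 := by
      apply sum_le_sum
      intro S _
      set u := signedSum Z h S ^ 2 with hu
      have hu4 : signedSum Z h S ^ 4 = u ^ 2 := by rw [hu]; ring
      have hu0 : 0 ≤ u := sq_nonneg _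
      rw [hu4]
      split_ifs with hlt
      · nlinarith [sq_nonneg (u - 6 * V)]
      · nlinarith
    rw [sum_sub_distrib, sum_sub_distrib, ← mul_sum, m2, sum_const, card_powerset, nsmul_eq_mul,
      ← sum_filter, sum_const, nsmul_eq_mul] at h2
    push_cast at h2
    nlinarith
  have h3 : 2 ^ #Z ≤ 12 * #{S ∈ Z.powerset | V < 2 * signedSum Z h S ^ 2} := by
    have : (0 : ℤ) < 3 * V ^ 2 := by positivity
    zify
    refine le_of_mul_le_mul_right ?_ this
    linarith
  have h4 : #{S ∈ Z.powerset | V < 2 * signedSum Z h S ^ 2} ≤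
      #{S ∈ Z.powerset | θ < signedSum Z h S} + #{S ∈ Z.powerset | signedSum Z h S < -θ} := by
    refine le_trans (card_le_card ?_) (card_union_le _ _)
    intro S hS
    simp only [mem_union, mem_filter] at *
    by_cases hc : θ < signedSum Z h S
    · exact Or.inl ⟨hS.1, hc⟩
    · refine Or.inr ⟨hS.1, ?_⟩
      by_contra hc'
      have := sq_le_sq' (not_lt.1 hc') (not_lt.1 hc)
      linarith [hS.2]
  have h5 : #{S ∈ Z.powerset | signedSum Z h S < -θ} ≤
      #{S ∈ Z.powerset | θ < signedSum Z h S} := by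
    apply card_le_card_of_injOn (fun S => Z \ S)
    · intro S hS
      simp only [Finset.mem_coe, mem_filter, mem_powerset] at *
      refine ⟨sdiff_subset, ?_⟩
      rw [signedSum_sdiff]
      linarith [hS.2]
    · intro S hS T hT hST
      simp only [Finset.mem_coe, mem_filter, mem_powerset] at *
      rw [← Finset.sdiff_sdiff_eq_self hS.1, ← Finset.sdiff_sdiff_eq_self hT.1, hST]
  omega

theorem two_mul_choose_half_le (N : ℕ) :
    2 * (N * N.choose (N / 2)) ≤ (N + 1) * (N + 1).choose ((N + 1) / 2) := by
  obtain ⟨q, hq | hq⟩ := Nat.even_or_odd' N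
  · have h1 : N / 2 = q := by omega
    have h2 : (N + 1) / 2 = q := by omega
    rw [h1, h2]
    have h3 := Nat.add_one_mul_choose_eq N q
    have h4 : (N + 1).choose (q + 1) = (N + 1).choose q := Nat.choose_symm_of_eq_add (by omega)
    rw [h4] at h3
    set A := N.choose q
    set B := (N + 1).choose q
    subst hq
    refine Nat.le_of_mul_le_mul_right (c := q + 1) ?_ (by omega)
    calc 2 * (2 * q * A) * (q + 1) = 4 * q * (q + 1) * A := by ring
      _ ≤ (2 * q + 1) * (2 * q + 1) * A := Nat.mul_le_mul_right _ (by nlinarith)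
      _ = (2 * q + 1) * ((2 * q + 1) * A) := by ring
      _ = _ := by rw [h3]; ring
  · have h1 : N / 2 = q := by omega
    have h2 : (N + 1) / 2 = q + 1 := by omega
    rw [h1, h2, Nat.choose_succ_succ]
    have h4 : N.choose (q + 1) = N.choose q := Nat.choose_symm_of_eq_add (by omega)
    rw [h4]
    nlinarith

theorem two_pow_mul_choose_half_le {m k : ℕ} (hkm : k ≤ m) (hm : 0 < m) :
    2 ^ k * m.choose (m / 2) ≤ 2 * (m + k).choose ((m + k) / 2) := by
  have h : ∀ k, 2 ^ k * (m * m.choose (m / 2)) ≤ (m + k) * (m + k).choose ((m + k) / 2) := by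
    intro k
    induction k with
    | zero => simp
    | succ k ih =>
      calc 2 ^ (k + 1) * (m * m.choose (m / 2)) = 2 * (2 ^ k * (m * m.choose (m / 2))) := by ring
        _ ≤ 2 * ((m + k) * (m + k).choose ((m + k) / 2)) := by gcongr
        _ ≤ _ := two_mul_choose_half_le (m + k)
  refine Nat.le_of_mul_le_mul_left (c := m) ?_ hm
  calc m * (2 ^ k * m.choose (m / 2)) = 2 ^ k * (m * m.choose (m / 2)) := by ring
    _ ≤ (m + k) * (m + k).choose ((m + k) / 2) := h k
    _ ≤ (m + m) * (m + k).choose ((m + k) / 2) := by gcongr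
    _ = _ := by ring

/-- `D` has `L` scales: there are thresholds `t 0 ≥ t 1 ≥ ⋯ ≥ t L` such that in each
step the number of new elements that are far above the new threshold dwarfs the square of the
number of old elements. Moreover at most half of `D` lies above the last threshold. -/
def Good (L : ℕ) (D : Finset ℤ) : Prop :=
  ∃ (top : ℤ) (t : ℕ → ℤ), (∀ x ∈ D, x ≤ top) ∧ (∀ l < L, t (l + 1) ≤ t l) ∧
    (∀ l < L, 8 * #{x ∈ D | t l < x} ^ 2 <
      #{x ∈ D | t (l + 1) < x ∧ x ≤ t l ∧ 2 * (top - x) ≤ top - t (l + 1)}) ∧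
    0 < #D ∧ 2 * #{x ∈ D | t L < x} ≤ #D

theorem signedSum_union {X Z : Finset ℤ} (hXZ : Disjoint X Z) (h : ℤ → ℤ) (S : Finset ℤ) :
    signedSum (X ∪ Z) h S = signedSum X h (S ∩ X) + signedSum Z h (S ∩ Z) := by
  unfold signedSum
  rw [sum_union hXZ]
  congr 1 <;>
  · apply sum_congr rfl
    intro x hx
    simp [hx]

/-- The sign patterns `S` on the elements above `t l` for which none of the signed sums of
excesses over `t 0`, …, `t l` is positive. -/
def badSigns (D : Finset ℤ) (t : ℕ → ℤ) (l : ℕ) : Finset (Finset ℤ) :=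
  {S ∈ ({x ∈ D | t l < x} : Finset ℤ).powerset |
    ∀ l' ≤ l, signedSum {x ∈ D | t l' < x} (fun x => x - t l') S ≤ 0}

theorem signedSum_inter {X Y : Finset ℤ} (hXY : X ⊆ Y) (h : ℤ → ℤ) (S : Finset ℤ) :
    signedSum X h (S ∩ Y) = signedSum X h S := by
  unfold signedSum
  apply sum_congr rfl
  intro x hx
  simp [hXY hx]

theorem filter_lt_subset (D : Finset ℤ) {t : ℕ → ℤ} {L : ℕ} (ht : ∀ l < L, t (l + 1) ≤ t l)
    {l l' : ℕ} (hll : l' ≤ l) (hl : l ≤ L) :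
    ({x ∈ D | t l' < x} : Finset ℤ) ⊆ {x ∈ D | t l < x} := by
  induction l, hll using Nat.le_induction with
  | base => exact Subset.rfl
  | succ l hll ih =>
    refine (ih (by omega)).trans ?_
    intro x hx
    have := ht l (by omega)
    simp only [mem_filter] at *
    exact ⟨hx.1, by omega⟩

/-- Whatever the signs above `t l`, the signed sum over the new elements exceeds the largest possible
contribution `θ` of the old ones with probability at least `1 / 24`. -/
theorem card_badSigns_succ {D : Finset ℤ} {t : ℕ → ℤ} {L l : ℕ} {top : ℤ}
    (htop : ∀ x ∈ D, x ≤ top) (ht : ∀ l < L, t (l + 1) ≤ t l) (hl : l < L)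
    (hgood : 8 * #{x ∈ D | t l < x} ^ 2 <
      #{x ∈ D | t (l + 1) < x ∧ x ≤ t l ∧ 2 * (top - x) ≤ top - t (l + 1)}) :
    24 * #(badSigns D t (l + 1)) ≤
      23 * 2 ^ #{x ∈ D | t (l + 1) < x ∧ x ≤ t l} * #(badSigns D t l) := by
  set X : Finset ℤ := {x ∈ D | t l < x} with hX
  set X' : Finset ℤ := {x ∈ D | t (l + 1) < x} with hX'
  set Z : Finset ℤ := {x ∈ D | t (l + 1) < x ∧ x ≤ t l} with hZ
  set h : ℤ → ℤ := fun x => x - t (l + 1) with hh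
  have htl := ht l hl
  have hdisj : Disjoint X Z := by
    rw [disjoint_left]
    intro x hx hx'
    simp only [hX, hZ, mem_filter] at *
    omega
  have hunion : X' = X ∪ Z := by
    ext x
    simp only [hX, hX', hZ, mem_filter, mem_union]
    constructor
    · intro h; by_cases h' : t l < x
      · exact Or.inl ⟨h.1, h'⟩
      · exact Or.inr ⟨h.1, h.2, by omega⟩
    · rintro (h | h)
      · exact ⟨h.1, by omega⟩
      · exact ⟨h.1, h.2.1⟩
  set θ : ℤ := #X * (top - t (l + 1)) with hθ
  have hV : 2 * θ ^ 2 < ∑ x ∈ Z, h x ^ 2 := by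
    have hpos : 0 < top - t (l + 1) := by
      obtain ⟨x, hx⟩ := card_pos.1 (lt_of_le_of_lt (Nat.zero_le _) hgood)
      simp only [mem_filter] at hx
      have := htop x hx.1
      omega
    set G : Finset ℤ := {x ∈ D | t (l + 1) < x ∧ x ≤ t l ∧ 2 * (top - x) ≤ top - t (l + 1)}
      with hG
    have h1 : #G * (top - t (l + 1)) ^ 2 ≤ 4 * ∑ x ∈ Z, h x ^ 2 := by
      rw [← nsmul_eq_mul, ← sum_const, mul_sum]
      refine (sum_le_sum (g := fun x => 4 * h x ^ 2) ?_).trans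
        (sum_le_sum_of_subset_of_nonneg ?_ ?_)
      · intro x hx
        simp only [hG, mem_filter] at hx
        have : top - t (l + 1) ≤ 2 * (x - t (l + 1)) := by omega
        simp only [hh]
        nlinarith
      · intro x hx
        simp only [hG, hZ, mem_filter] at *
        tauto
      · intro x _ _
        positivity
    have h2 : (8 * (#X : ℤ) ^ 2 + 1) * (top - t (l + 1)) ^ 2 ≤ #G * (top - t (l + 1)) ^ 2 := by
      have : 8 * (#X : ℤ) ^ 2 + 1 ≤ #G := by exact_mod_cast hgood
      gcongr
    have h3 : 0 < (top - t (l + 1)) ^ 2 := by positivity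
    rw [hθ]
    nlinarith
  have hac := signedSum_anticoncentration hV
  have hcount : 24 * #{S ∈ Z.powerset | ¬ θ < signedSum Z h S} ≤ 23 * 2 ^ #Z := by
    have := card_filter_add_card_filter_not (s := Z.powerset) (fun S => θ < signedSum Z h S)
    rw [card_powerset] at this
    omega
  have hinj : #(badSigns D t (l + 1)) ≤
      #(badSigns D t l ×ˢ {S ∈ Z.powerset | ¬ θ < signedSum Z h S}) := by
    apply card_le_card_of_injOn (fun S => (S ∩ X, S ∩ Z))
    · intro S hS
      simp only [badSigns, Finset.mem_coe, mem_product, mem_filter, mem_powerset] at *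
      obtain ⟨hS1, hS2⟩ := hS
      refine ⟨⟨inter_subset_right, ?_⟩, inter_subset_right, ?_⟩
      · intro l' hl'
        rw [signedSum_inter]
        · exact hS2 l' (by omega)
        · exact filter_lt_subset D ht hl' (by omega)
      · have h1 := hS2 (l + 1) le_rfl
        rw [← hX', hunion, signedSum_union hdisj] at h1
        have h2 : -θ ≤ signedSum X h (S ∩ X) := by
          unfold signedSum
          rw [hθ, ← nsmul_eq_mul, ← sum_const, ← sum_neg_distrib]
          apply sum_le_sum
          intro x hx
          simp only [hX, mem_filter] at hx
          have := htop x hx.1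
          simp only [hh]
          split_ifs <;> omega
        simp only [hh] at *
        omega
    · intro S hS T hT hST
      simp only [badSigns, Finset.mem_coe, mem_filter, mem_powerset] at *
      obtain ⟨h1, h2⟩ := Prod.ext_iff.1 hST
      simp only at h1 h2
      have hS' : S ⊆ X ∪ Z := by rw [← hunion]; exact hS.1
      have hT' : T ⊆ X ∪ Z := by rw [← hunion]; exact hT.1
      rw [← inter_eq_left.2 hS', ← inter_eq_left.2 hT', inter_union_distrib_left,
        inter_union_distrib_left, h1, h2]
  rw [card_product] at hinj
  calc 24 * #(badSigns D t (l + 1)) ≤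
      24 * (#(badSigns D t l) * #{S ∈ Z.powerset | ¬ θ < signedSum Z h S}) := by gcongr
    _ = #(badSigns D t l) * (24 * #{S ∈ Z.powerset | ¬ θ < signedSum Z h S}) := by ring
    _ ≤ #(badSigns D t l) * (23 * 2 ^ #Z) := by gcongr
    _ = _ := by ring

theorem card_badSigns {D : Finset ℤ} {t : ℕ → ℤ} {L : ℕ} {top : ℤ}
    (htop : ∀ x ∈ D, x ≤ top) (ht : ∀ l < L, t (l + 1) ≤ t l)
    (hgood : ∀ l < L, 8 * #{x ∈ D | t l < x} ^ 2 <
      #{x ∈ D | t (l + 1) < x ∧ x ≤ t l ∧ 2 * (top - x) ≤ top - t (l + 1)}) {l : ℕ} (hl : l ≤ L) :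
    24 ^ l * #(badSigns D t l) ≤ 23 ^ l * 2 ^ #{x ∈ D | t l < x} := by
  induction l with
  | zero =>
    simp only [pow_zero, one_mul]
    exact (card_filter_le _ _).trans (card_powerset _).le
  | succ l ih =>
    have h1 := ih (by omega)
    have h2 := card_badSigns_succ htop ht hl (hgood l hl)
    have h3 : #{x ∈ D | t (l + 1) < x} =
        #{x ∈ D | t (l + 1) < x ∧ x ≤ t l} + #{x ∈ D | t l < x} := by
      rw [← card_filter_add_card_filter_not (s := {x ∈ D | t (l + 1) < x}) (fun x => x ≤ t l),
        filter_filter, filter_filter]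
      congr 2
      have := ht l hl
      ext x
      simp only [mem_filter]
      constructor
      · rintro ⟨h1, h2, h3⟩; exact ⟨h1, by omega⟩
      · rintro ⟨h1, h2⟩; exact ⟨h1, by omega, by omega⟩
    rw [h3, pow_add]
    set z := #{x ∈ D | t (l + 1) < x ∧ x ≤ t l}
    set k := #{x ∈ D | t l < x}
    calc 24 ^ (l + 1) * #(badSigns D t (l + 1)) = 24 ^ l * (24 * #(badSigns D t (l + 1))) := by
          ring
      _ ≤ 24 ^ l * (23 * 2 ^ z * #(badSigns D t l)) := by gcongr
      _ = 23 * 2 ^ z * (24 ^ l * #(badSigns D t l)) := by ring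
      _ ≤ 23 * 2 ^ z * (23 ^ l * 2 ^ k) := by gcongr
      _ = _ := by ring

open Classical in
/-- Among the balanced sign patterns on a set with many scales, few have all signed sums of
excesses nonpositive. -/
theorem card_balanced_bad {L r : ℕ} {D : Finset ℤ} (hD : Good L D) (hr : #D = 2 * r) :
    24 ^ L * #{S ∈ powersetCard r D | ∀ t : ℤ, signedSum D (fun x => max (x - t) 0) S ≤ 0} ≤
      2 * 23 ^ L * (2 * r).choose r := by
  obtain ⟨top, t, htop, ht, hgood, hpos, hhalf⟩ := hD
  have hB := card_badSigns htop ht hgood le_rfl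
  set X : Finset ℤ := {x ∈ D | t L < x} with hX
  have hXD : X ⊆ D := filter_subset _ _
  set m := #D - #X with hm
  have h1 : #{S ∈ powersetCard r D | ∀ t : ℤ, signedSum D (fun x => max (x - t) 0) S ≤ 0} ≤
      m.choose (m / 2) * #(badSigns D t L) := by
    apply card_le_mul_card_image_of_maps_to (f := fun S => S ∩ X)
    · intro S hS
      simp only [badSigns, mem_filter, mem_powerset] at *
      refine ⟨inter_subset_right, ?_⟩
      intro l hl
      rw [signedSum_inter (filter_lt_subset D ht hl le_rfl)]
      refine le_of_eq_of_le ?_ (hS.2 (t l))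
      unfold signedSum
      rw [sum_filter]
      apply sum_congr rfl
      intro x hx
      beta_reduce
      by_cases hxt : t l < x
      · rw [if_pos hxt, max_eq_left (by omega)]
      · rw [if_neg hxt, max_eq_right (by omega)]; simp
    · intro S₀ _
      calc _ ≤ #(powersetCard (r - #S₀) (D \ X)) := by
            apply card_le_card_of_injOn (fun S => S \ X)
            · intro S hS
              simp only [Finset.mem_coe, mem_filter, mem_powersetCard] at *
              obtain ⟨⟨⟨h1, h2⟩, -⟩, h3⟩ := hS
              refine ⟨sdiff_subset_sdiff h1 Subset.rfl, ?_⟩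
              have := card_sdiff_add_card_inter S X
              rw [h3] at this
              omega
            · intro S hS T hT hST
              simp only [Finset.mem_coe, mem_filter] at *
              rw [← sdiff_union_inter S X, ← sdiff_union_inter T X, hST, hS.2, hT.2]
        _ = m.choose (r - #S₀) := by rw [card_powersetCard, card_sdiff_of_subset hXD]
        _ ≤ _ := Nat.choose_le_middle _ _
  have h2 := two_pow_mul_choose_half_le (m := m) (k := #X) (by omega) (by omega)
  have h3 : m + #X = 2 * r := by
    have := card_le_card hXD
    omega
  rw [h3, Nat.mul_div_cancel_left _ (by norm_num)] at h2
  calc _ ≤ 24 ^ L * (m.choose (m / 2) * #(badSigns D t L)) := by gcongr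
    _ = m.choose (m / 2) * (24 ^ L * #(badSigns D t L)) := by ring
    _ ≤ m.choose (m / 2) * (23 ^ L * 2 ^ #X) := by gcongr
    _ = 23 ^ L * (2 ^ #X * m.choose (m / 2)) := by ring
    _ ≤ 23 ^ L * (2 * (2 * r).choose r) := by gcongr
    _ = _ := by ring

/-! ### Frobenius coordinates as pairs of sets -/

/-- The set of coordinates of colour `c`. -/
def coords (s : State) (c : Bool) : Finset ℤ := (range s.1).image (s.2 c)

theorem IsSt.injOn {m : ℤ} {s : State} (h : IsSt m s) (c : Bool) :
    Set.InjOn (s.2 c) (range s.1) := by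
  intro i hi j hj hij
  simp only [Finset.coe_range, Set.mem_Iio] at *
  rcases lt_trichotomy i j with h1 | h1 | h1
  · have := h.lt c h1 hj; omega
  · exact h1
  · have := h.lt c h1 hi; omega

theorem IsSt.card_coords {m : ℤ} {s : State} (h : IsSt m s) (c : Bool) : #(coords s c) = s.1 := by
  rw [coords, card_image_of_injOn (h.injOn c), card_range]

theorem IsSt.sum_coords {m : ℤ} {s : State} (h : IsSt m s) (c : Bool) (f : ℤ → ℤ) :
    ∑ x ∈ coords s c, f x = ∑ i ∈ range s.1, f (s.2 c i) := by
  rw [coords, sum_image (h.injOn c)]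

theorem IsSt.card_coords_gt {m : ℤ} {s : State} (h : IsSt m s) (c : Bool) {i : ℕ}
    (hi : i < s.1) : #{x ∈ coords s c | s.2 c i < x} = i := by
  have : {x ∈ coords s c | s.2 c i < x} = (range i).image (s.2 c) := by
    ext x
    simp only [coords, mem_filter, mem_image, mem_range]
    constructor
    · rintro ⟨⟨k, hk, rfl⟩, hlt⟩
      refine ⟨k, ?_, rfl⟩
      by_contra hc
      have := h.add_le c (not_lt.1 hc) hk
      omega
    · rintro ⟨k, hk, rfl⟩
      exact ⟨⟨k, by omega, rfl⟩, h.lt c hk hi⟩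
  rw [this, card_image_of_injOn, card_range]
  exact (h.injOn c).mono (by intro k; simp; omega)

theorem ext_coords {m : ℤ} {s t : State} (hs : IsSt m s) (ht : IsSt m t)
    (h : ∀ c, coords s c = coords t c) : s = t := by
  have hd : s.1 = t.1 := by rw [← hs.card_coords true, ← ht.card_coords true, h]
  refine Prod.ext hd ?_
  funext c i
  by_cases hi : i < s.1
  · have h1 : s.2 c i ∈ coords t c := by
      rw [← h]; exact mem_image_of_mem _ (mem_range.2 hi)
    obtain ⟨k, hk, hki⟩ := mem_image.1 h1
    have h2 := hs.card_coords_gt c hi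
    have h3 := ht.card_coords_gt c (mem_range.1 hk)
    rw [hki, ← h, h2] at h3
    rw [← hki, h3]
  · rw [hs.1 c i (by omega), ht.1 c i (by omega)]

theorem exists_enumeration (A : Finset ℤ) : ∃ f : ℕ → ℤ, (∀ i, #A ≤ i → f i = 0) ∧
    (∀ i, i + 1 < #A → f (i + 1) < f i) ∧ (range #A).image f = A := by
  induction A using Finset.induction_on_min with
  | empty => exact ⟨fun _ => 0, by simp⟩
  | insert a A ha ih =>
    obtain ⟨f, h1, h2, h3⟩ := ih
    have haA : a ∉ A := fun h => lt_irrefl _ (ha a h)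
    rw [card_insert_of_notMem haA]
    refine ⟨fun i => if i = #A then a else f i, ?_, ?_, ?_⟩
    · intro i hi
      beta_reduce
      rw [if_neg (by omega), h1 i (by omega)]
    · intro i hi
      beta_reduce
      rw [if_neg (by omega : ¬ i = #A)]
      split_ifs with h
      · apply ha
        rw [← h3]
        exact mem_image_of_mem _ (by simp; omega)
      · exact h2 i (by omega)
    · rw [range_add_one, image_insert, if_pos rfl]
      congr 1
      conv_rhs => rw [← h3]
      apply image_congr
      intro i hi
      simp only [Finset.coe_range, Set.mem_Iio] at hi
      simp [hi.ne]

theorem exists_state {m : ℤ} {d : ℕ} (A : Bool → Finset ℤ) (hd : ∀ c, #(A c) = d)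
    (h0 : ∀ c, ∀ x ∈ A c, 0 ≤ x) (hsum : ∑ x ∈ A true, x + ∑ x ∈ A false, x + d = m) :
    ∃ s, IsSt m s ∧ ∀ c, coords s c = A c := by
  choose f h1 h2 h3 using fun c => exists_enumeration (A c)
  simp only [hd] at h1 h2 h3
  have hinj : ∀ c, Set.InjOn (f c) (range d) := by
    intro c
    apply injOn_of_card_image_eq
    rw [h3, hd, card_range]
  refine ⟨(d, f), ⟨h1, h2, ?_, ?_⟩, h3⟩
  · intro c i hi
    apply h0 c
    rw [← h3]
    exact mem_image_of_mem _ (mem_range.2 hi)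
  · rw [← hsum, ← h3 true, ← h3 false, sum_image (hinj _), sum_image (hinj _)]
    simp [sum_add_distrib]

theorem IsSt.sum_coords_add {m : ℤ} {s : State} (h : IsSt m s) :
    ∑ x ∈ coords s true, x + ∑ x ∈ coords s false, x + s.1 = m := by
  rw [h.sum_coords, h.sum_coords, ← h.2.2.2]
  simp [sum_add_distrib]

theorem IsSt.coords_nonneg {m : ℤ} {s : State} (h : IsSt m s) (c : Bool) {x : ℤ}
    (hx : x ∈ coords s c) : 0 ≤ x := by
  obtain ⟨i, hi, rfl⟩ := mem_image.1 hx
  exact h.2.2.1 c i (mem_range.1 hi)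

theorem recover_sets {D E S : Finset ℤ} (hDE : Disjoint E D) (hS : S ⊆ D) :
    symmDiff (E ∪ S) (E ∪ (D \ S)) = D ∧ (E ∪ S) ∩ (E ∪ (D \ S)) = E ∧
      (E ∪ S) \ (E ∪ (D \ S)) = S := by
  have h1 : ∀ x, x ∈ E → x ∉ D := fun _ h => disjoint_left.1 hDE h
  refine ⟨?_, ?_, ?_⟩ <;>
  · ext x
    have h2 := h1 x
    have h3 := @hS x
    simp only [mem_symmDiff, mem_union, mem_sdiff, mem_inter]
    tauto

theorem decompose_sets (A B : Finset ℤ) : Disjoint (A ∩ B) (symmDiff A B) ∧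
    A \ B ⊆ symmDiff A B ∧ A = A ∩ B ∪ A \ B ∧ B = A ∩ B ∪ symmDiff A B \ (A \ B) := by
  refine ⟨?_, ?_, ?_, ?_⟩
  · rw [disjoint_left]
    intro x
    simp only [mem_symmDiff, mem_inter]
    tauto
  · intro x
    simp only [mem_symmDiff, mem_sdiff]
    tauto
  all_goals
    ext x
    simp only [mem_symmDiff, mem_union, mem_sdiff, mem_inter]
    tauto

theorem signedSum_symmDiff (A B : Finset ℤ) (h : ℤ → ℤ) :
    signedSum (symmDiff A B) h (A \ B) = ∑ x ∈ A, h x - ∑ x ∈ B, h x := by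
  have h1 : symmDiff A B = A \ B ∪ B \ A := rfl
  have h2 : Disjoint (A \ B) (B \ A) := disjoint_sdiff_sdiff
  unfold signedSum
  rw [h1, sum_union h2, ← sum_sdiff_sub_sum_sdiff, sub_eq_add_neg, ← sum_neg_distrib]
  congr 1
  · apply sum_congr rfl
    intro x hx
    rw [if_pos hx]
  · apply sum_congr rfl
    intro x hx
    rw [if_neg (fun h => disjoint_left.1 h2 h hx)]

theorem card_symmDiff_of_card_eq {A B : Finset ℤ} (h : #A = #B) :
    #(symmDiff A B) = 2 * #(A \ B) := by
  have h1 : symmDiff A B = A \ B ∪ B \ A := rfl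
  have h2 : Disjoint (A \ B) (B \ A) := disjoint_sdiff_sdiff
  have h3 := card_sdiff_add_card_inter A B
  have h4 := card_sdiff_add_card_inter B A
  rw [inter_comm] at h4
  rw [h1, card_union_of_disjoint h2]
  omega

open Classical in
/-- Conditionally on the symmetric difference and the intersection of the two coordinate sets,
the distribution of the symmetric difference over the two colours is uniform among the balanced
ones. Hence the bound for balanced sign patterns carries over to states. -/
theorem card_bad_good (c : Bool) (L n : ℕ) :
    24 ^ L * #{s ∈ St n | Bad c s ∧ Good L (symmDiff (coords s c) (coords s (!c)))} ≤
      2 * 23 ^ L * #(St n) := by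
  set U := {s ∈ St n | Bad c s ∧ Good L (symmDiff (coords s c) (coords s (!c)))} with hU
  let κ : State → Finset ℤ × Finset ℤ := fun s =>
    (symmDiff (coords s c) (coords s (!c)), coords s c ∩ coords s (!c))
  have hmap : Set.MapsTo κ (St n) ((St n).image κ : Finset _) := by
    intro s hs
    exact mem_coe.2 (mem_image_of_mem _ hs)
  have hmapU : Set.MapsTo κ U ((St n).image κ : Finset _) := by
    intro s hs
    exact hmap (filter_subset _ _ hs)
  rw [card_eq_sum_card_fiberwise hmap, card_eq_sum_card_fiberwise hmapU, mul_sum, mul_sum]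
  apply sum_le_sum
  intro b hb
  obtain ⟨s₀, hs₀, hb⟩ := mem_image.1 hb
  rw [mem_St] at hs₀
  by_cases hgood : Good L b.1
  swap
  · have : {s ∈ U | κ s = b} = ∅ := by
      rw [filter_eq_empty_iff]
      intro s hs hκ
      rw [← hκ] at hgood
      exact hgood (mem_filter.1 hs).2.2
    rw [this]
    simp
  have hcard : ∀ s, IsSt n s → κ s = b → #b.1 = 2 * #(coords s c \ coords s (!c)) := by
    intro s hs hκ
    rw [← hκ]
    exact card_symmDiff_of_card_eq (by rw [hs.card_coords, hs.card_coords])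
  set r := #(coords s₀ c \ coords s₀ (!c)) with hr
  have hDr := hcard s₀ hs₀ hb
  have hright : (2 * r).choose r ≤ #{s ∈ St n | κ s = b} := by
    rw [← hDr, ← card_powersetCard]
    obtain ⟨d1, d2, d3, d4⟩ := decompose_sets (coords s₀ c) (coords s₀ (!c))
    have hbD : symmDiff (coords s₀ c) (coords s₀ (!c)) = b.1 := by rw [← hb]
    have hbE : coords s₀ c ∩ coords s₀ (!c) = b.2 := by rw [← hb]
    rw [hbD, hbE] at d1 d4
    rw [hbD] at d2
    rw [hbE] at d3
    have hex : ∀ S ∈ powersetCard r b.1, ∃ s, IsSt n s ∧ coords s c = b.2 ∪ S ∧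
        coords s (!c) = b.2 ∪ (b.1 \ S) := by
      intro S hS
      rw [mem_powersetCard] at hS
      have hbal : ∀ (T : Finset ℤ), T ⊆ b.1 → ∀ f : ℤ → ℤ,
          ∑ x ∈ b.2 ∪ T, f x + ∑ x ∈ b.2 ∪ (b.1 \ T), f x =
            2 * ∑ x ∈ b.2, f x + ∑ x ∈ b.1, f x := by
        intro T hT f
        rw [sum_union (d1.mono_right hT), sum_union (d1.mono_right sdiff_subset),
          ← sum_sdiff hT]
        ring
      have hsum : ∑ x ∈ b.2 ∪ S, x + ∑ x ∈ b.2 ∪ (b.1 \ S), x + s₀.1 = (n : ℤ) := by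
        rw [hbal S hS.1 fun x => x, ← hbal _ d2 fun x => x, ← d3, ← d4, ← hs₀.sum_coords_add]
        cases c <;> simp [add_comm]
      have hnn : ∀ x, x ∈ b.2 ∨ x ∈ b.1 → 0 ≤ x := by
        intro x hx
        rw [← hbD, ← hbE, mem_inter, mem_symmDiff] at hx
        rcases hx with hx | hx | hx
        · exact hs₀.coords_nonneg c hx.1
        · exact hs₀.coords_nonneg c hx.1
        · exact hs₀.coords_nonneg _ hx.1
      have hcd : #b.2 + r = s₀.1 := by
        rw [← hs₀.card_coords c]
        conv_rhs => rw [d3]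
        rw [card_union_of_disjoint (d1.mono_right d2)]
      have hc1 : #(b.2 ∪ S) = s₀.1 := by
        rw [card_union_of_disjoint (d1.mono_right hS.1), hS.2, hcd]
      have hc2 : #(b.2 ∪ (b.1 \ S)) = s₀.1 := by
        rw [card_union_of_disjoint (d1.mono_right sdiff_subset), card_sdiff_of_subset hS.1, hS.2,
          hDr, ← hcd]
        omega
      obtain ⟨s, hs, hsc⟩ := exists_state (m := n) (d := s₀.1)
        (fun c' => if c' = c then b.2 ∪ S else b.2 ∪ (b.1 \ S))
        (by intro c'; split_ifs <;> assumption)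
        (by
          intro c' x hx
          apply hnn
          have h3 := @hS.1 x
          split_ifs at hx <;> simp only [mem_union, mem_sdiff] at hx <;> tauto)
        (by
          rw [← hsum]
          cases c <;> simp [add_comm])
      refine ⟨s, hs, ?_, ?_⟩
      · rw [hsc]; simp
      · rw [hsc]; simp
    choose! g hg using hex
    apply card_le_card_of_injOn g
    · intro S hS
      have hS' := mem_coe.1 hS
      obtain ⟨g1, g2, g3⟩ := hg S hS'
      obtain ⟨r1, r2, r3⟩ := recover_sets d1 (mem_powersetCard.1 hS').1
      simp only [Finset.mem_coe, mem_filter, mem_St]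
      refine ⟨g1, ?_⟩
      simp only [κ, g2, g3, r1, r2]
    · intro S hS T hT hST
      obtain ⟨g1, g2, g3⟩ := hg S (mem_coe.1 hS)
      obtain ⟨g1', g2', g3'⟩ := hg T (mem_coe.1 hT)
      obtain ⟨r1, r2, r3⟩ := recover_sets d1 (mem_powersetCard.1 (mem_coe.1 hS)).1
      obtain ⟨r1', r2', r3'⟩ := recover_sets d1 (mem_powersetCard.1 (mem_coe.1 hT)).1
      rw [← r3, ← r3', ← g2, ← g3, ← g2', ← g3', hST]
  have hleft : #{s ∈ U | κ s = b} ≤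
      #{S ∈ powersetCard r b.1 | ∀ t : ℤ, signedSum b.1 (fun x => max (x - t) 0) S ≤ 0} := by
    apply card_le_card_of_injOn (fun s => coords s c \ coords s (!c))
    · intro s hs
      simp only [hU, Finset.mem_coe, mem_filter, mem_St, mem_powersetCard] at *
      obtain ⟨⟨h1, h2, h3⟩, h4⟩ := hs
      have h5 := hcard s h1 h4
      have h6 : symmDiff (coords s c) (coords s (!c)) = b.1 := by rw [← h4]
      refine ⟨⟨?_, by omega⟩, ?_⟩
      · rw [← h6]; exact (decompose_sets _ _).2.1
      · intro t
        rw [← h6, signedSum_symmDiff, h1.sum_coords, h1.sum_coords, sub_nonpos]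
        exact h2 t
    · intro s hs s' hs' h
      simp only [hU, Finset.mem_coe, mem_filter, mem_St] at hs hs' h
      obtain ⟨⟨h1, -⟩, h4⟩ := hs
      obtain ⟨⟨h1', -⟩, h4'⟩ := hs'
      rw [← h4'] at h4
      obtain ⟨e1, e2⟩ := Prod.ext_iff.1 h4
      simp only [κ] at e1 e2
      obtain ⟨-, -, d3, d4⟩ := decompose_sets (coords s c) (coords s (!c))
      obtain ⟨-, -, d3', d4'⟩ := decompose_sets (coords s' c) (coords s' (!c))
      rw [e1, e2, h, ← d4'] at d4
      rw [e2, h, ← d3'] at d3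
      apply ext_coords h1 h1'
      intro c'
      by_cases hc : c' = c
      · rw [hc, d3]
      · rw [Bool.eq_not.2 hc, d4]
  calc _ ≤ 24 ^ L * #{S ∈ powersetCard r b.1 |
        ∀ t : ℤ, signedSum b.1 (fun x => max (x - t) 0) S ≤ 0} := by
        exact Nat.mul_le_mul_left _ hleft
    _ ≤ 2 * 23 ^ L * (2 * r).choose r := card_balanced_bad hgood hDr
    _ ≤ _ := Nat.mul_le_mul_left _ hright

/-! ### Typical coordinate sets have many scales -/

/-- The larger of the two coordinates with index `J`. -/
def threshold (s : State) (J : ℕ) : ℤ := max (s.2 true J) (s.2 false J)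

theorem le_threshold (s : State) (c : Bool) (J : ℕ) : s.2 c J ≤ threshold s J := by
  cases c
  · exact le_max_right _ _
  · exact le_max_left _ _

theorem exists_threshold_eq (s : State) (J : ℕ) : ∃ c, threshold s J = s.2 c J := by
  rcases max_choice (s.2 true J) (s.2 false J) with h | h
  · exact ⟨true, h⟩
  · exact ⟨false, h⟩

theorem IsSt.threshold_anti {m : ℤ} {s : State} (h : IsSt m s) {i j : ℕ} (hij : i ≤ j)
    (hj : j < s.1) : threshold s j ≤ threshold s i := by
  obtain ⟨c, hc⟩ := exists_threshold_eq s j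
  have h1 := le_threshold s c i
  have h2 := h.add_le c hij hj
  omega

/-- At most `J` coordinates of each colour exceed the threshold. -/
theorem card_above_threshold_le {m : ℤ} {s : State} (h : IsSt m s) {J : ℕ} (hJ : J < s.1) :
    #{x ∈ symmDiff (coords s true) (coords s false) | threshold s J < x} ≤ 2 * J := by
  have h1 := h.card_coords_gt true hJ
  have h2 := h.card_coords_gt false hJ
  refine (card_le_card (t := {x ∈ coords s true | s.2 true J < x} ∪
    {x ∈ coords s false | s.2 false J < x}) ?_).trans ((card_union_le _ _).trans (by omega))
  intro x hx
  have h3 := le_threshold s true J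
  have h4 := le_threshold s false J
  simp only [mem_filter, mem_union, mem_symmDiff] at *
  rcases hx.1 with hx1 | hx1
  · exact Or.inl ⟨hx1.1, by omega⟩
  · exact Or.inr ⟨hx1.1, by omega⟩

/-- The colour attaining the threshold has exactly `J` coordinates above it; none of them is shared
with the other colour, as no coincidence occurs among the first `M` coordinates. -/
theorem le_card_above_threshold {m : ℤ} {s : State} (h : IsSt m s) {J M : ℕ} (hJM : J ≤ M)
    (hM : M < s.1) (hne : ∀ i < M, ∀ k < M, s.2 true i ≠ s.2 false k) :
    J ≤ #{x ∈ symmDiff (coords s true) (coords s false) | threshold s J < x} := by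
  obtain ⟨c, hc⟩ := exists_threshold_eq s J
  have hidx : ∀ c' k, k < s.1 → threshold s J < s.2 c' k → k < M := by
    intro c' k hk hlt
    by_contra hcon
    have h1 := h.add_le c' (not_lt.1 hcon) hk
    have h2 := le_threshold s c' M
    have h3 := h.threshold_anti hJM hM
    omega
  refine le_of_eq_of_le (h.card_coords_gt c (by omega : J < s.1)).symm (card_le_card ?_)
  intro x hx
  rw [mem_filter, ← hc] at hx
  rw [mem_filter, mem_symmDiff]
  refine ⟨?_, hx.2⟩
  obtain ⟨i, hi, rfl⟩ := mem_image.1 hx.1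
  have hi' := mem_range.1 hi
  have hiM := hidx c i hi' hx.2
  cases c
  · refine Or.inr ⟨hx.1, fun hmem => ?_⟩
    obtain ⟨k, hk, hki⟩ := mem_image.1 hmem
    exact hne k (hidx true k (mem_range.1 hk) (by rw [hki]; exact hx.2)) i hiM hki
  · refine Or.inl ⟨hx.1, fun hmem => ?_⟩
    obtain ⟨k, hk, hki⟩ := mem_image.1 hmem
    exact hne i hiM k (hidx false k (mem_range.1 hk) (by rw [hki]; exact hx.2)) hki.symm

/-- The thresholds at the indices `J 0, …, J L` witness `L` scales. The constant
`32 * J l ^ 2 + 2 * J l + 1` provides more than `8 * (2 * J l) ^ 2` new elements after the at most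
`2 * J l` old ones are discarded. -/
theorem good_of_doubling {m : ℤ} {s : State} (h : IsSt m s) {L M : ℕ} {J : ℕ → ℕ}
    (hJ : ∀ l < L, 32 * J l ^ 2 + 2 * J l + 1 < J (l + 1)) (hJM : ∀ l ≤ L, 4 * J l < M)
    (hM : M < s.1) (hne : ∀ i < M, ∀ k < M, s.2 true i ≠ s.2 false k)
    (hdbl : ∀ l < L, ∀ c c', 2 * (s.2 c' 0 - s.2 c' (32 * J l ^ 2 + 2 * J l + 1)) ≤
      s.2 c 0 - s.2 c (J (l + 1))) :
    Good L (symmDiff (coords s true) (coords s false)) := by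
  set D := symmDiff (coords s true) (coords s false) with hD
  refine ⟨threshold s 0, fun l => threshold s (J l), ?_, ?_, ?_, ?_, ?_⟩
  · intro x hx
    have : ∃ c, x ∈ coords s c := by
      rw [hD, mem_symmDiff] at hx
      rcases hx with hx | hx
      · exact ⟨_, hx.1⟩
      · exact ⟨_, hx.1⟩
    obtain ⟨c, hc⟩ := this
    obtain ⟨i, hi, rfl⟩ := mem_image.1 hc
    have h1 := h.add_le c (Nat.zero_le i) (mem_range.1 hi)
    have h2 := le_threshold s c 0
    push_cast at h1
    omega
  · intro l hl
    have h1 := hJ l hl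
    have h2 := hJM (l + 1) (by omega)
    exact h.threshold_anti (by nlinarith) (by omega)
  · intro l hl
    have h1 := hJ l hl
    have h2 := hJM (l + 1) (by omega)
    have h2' := hJM l (by omega)
    set j := 32 * J l ^ 2 + 2 * J l + 1 with hj
    have h3 := card_above_threshold_le h (J := J l) (by omega)
    have h4 := le_card_above_threshold h (J := j) (by omega) hM hne
    rw [← hD] at h3 h4
    have h5 : j ≤ #{x ∈ D | threshold s (J (l + 1)) < x ∧ x ≤ threshold s (J l) ∧
        2 * (threshold s 0 - x) ≤ threshold s 0 - threshold s (J (l + 1))} +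
        #{x ∈ D | threshold s (J l) < x} := by
      refine h4.trans ((card_le_card ?_).trans (card_union_le _ _))
      intro x hx
      simp only [mem_filter, mem_union] at *
      by_cases hxl : threshold s (J l) < x
      · exact Or.inr ⟨hx.1, hxl⟩
      · obtain ⟨c', hc'⟩ := exists_threshold_eq s 0
        obtain ⟨c, hc⟩ := exists_threshold_eq s (J (l + 1))
        have h6 := hdbl l hl c c'
        rw [← hj] at h6
        have h7 := le_threshold s c' j
        have h8 := le_threshold s c 0
        have h9 := h.threshold_anti h1.le (by omega)
        exact Or.inl ⟨hx.1, by omega, by omega, by omega⟩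
    have h6 : 8 * #{x ∈ D | threshold s (J l) < x} ^ 2 ≤ 8 * (2 * J l) ^ 2 := by
      gcongr
    nlinarith
  · have h1 := le_card_above_threshold h (J := M) le_rfl hM hne
    have h2 := card_filter_le D (fun x => threshold s M < x)
    have h3 := hJM 0 (Nat.zero_le _)
    rw [← hD] at h1
    omega
  · have h1 := le_card_above_threshold h (J := M) le_rfl hM hne
    have h2 := card_filter_le D (fun x => threshold s M < x)
    have h3 := hJM L le_rfl
    have h4 := card_above_threshold_le h (J := J L) (by omega)
    rw [← hD] at h1 h4
    beta_reduce
    omega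

/-- For every fixed `L`, typical coordinate sets have `L` scales: the indices `J l` are chosen
successively by `exists_doubling`, the total error being at most `4 * L * (η / (4 * L + 1))`. -/
theorem upperFreq_not_good (c : Bool) (L : ℕ) (η : ℝ) (hη : 0 < η) :
    UpperFreq (fun s => ¬ Good L (symmDiff (coords s c) (coords s (!c)))) η := by
  have hη' : 0 < η / (4 * L + 1) := by positivity
  choose next hnext using fun J : ℕ =>
    exists_doubling (j := 32 * J ^ 2 + 2 * J + 1) (by omega) hη'
  let J : ℕ → ℕ := fun l => Nat.rec 1 (fun _ => next) l
  have hJs : ∀ l, J (l + 1) = next (J l) := fun l => rfl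
  have hJ : ∀ l, 32 * J l ^ 2 + 2 * J l + 1 < J (l + 1) := fun l => (hnext (J l)).1
  have hmono : Monotone J := monotone_nat_of_le_succ fun l => by
    have := hJ l
    nlinarith
  set M := 4 * J L + 1 with hM
  have e1 := upperFreq_durfee_le (M + 1)
  have e2 := UpperFreq.exists_finset (range M ×ˢ range M)
    (fun z _ => upperFreq_coincidence z.1 z.2)
  have e3 := UpperFreq.exists_finset (range L ×ˢ (univ : Finset (Bool × Bool)))
    (fun z _ => (hnext (J z.1)).2 z.2.1 z.2.2)
  refine ((e1.or e2).or e3).mono ?_ ?_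
  · simp only [sum_const, card_product, card_range, card_univ, Fintype.card_prod,
      Fintype.card_bool, nsmul_eq_mul, mul_zero, add_zero, zero_add]
    rw [mul_div_assoc', div_le_iff₀ (by positivity)]
    push_cast
    nlinarith
  · intro n s hs hng
    by_contra hcon
    simp only [not_or, not_exists, not_and, not_le, not_lt] at hcon
    obtain ⟨⟨c1, c2⟩, c3⟩ := hcon
    apply hng
    have hgood : Good L (symmDiff (coords s true) (coords s false)) := by
      apply good_of_doubling hs (J := J) (M := M) (fun l _ => hJ l)
      · intro l hl
        have := hmono hl
        omega
      · omega
      · intro i hi k hk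
        exact c2 (i, k) (by simp [hi, hk]) (by dsimp only; omega)
      · intro l hl c c'
        have h1 := hmono (by omega : l + 1 ≤ L)
        exact c3 (l, c, c') (by simp [hl]) (by
          have := hJs l
          dsimp only
          omega)
    cases c
    · rw [symmDiff_comm]; exact hgood
    · exact hgood

theorem upperFreq_bad (c : Bool) : UpperFreq (Bad c) 0 := by
  classical
  apply UpperFreq.of_le
  intro η hη
  obtain ⟨L, hL⟩ := exists_pow_lt_of_lt_one (show (0 : ℝ) < η / 4 by positivity)
    (show (23 / 24 : ℝ) < 1 by norm_num)
  have h1 : UpperFreq (fun s => Bad c s ∧ Good L (symmDiff (coords s c) (coords s (!c))))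
      (2 * (23 / 24) ^ L) := by
    intro δ hδ
    filter_upwards with n
    rw [ncard_sep_eq]
    have h2 : (24 : ℝ) ^ L *
        #{s ∈ St n | Bad c s ∧ Good L (symmDiff (coords s c) (coords s (!c)))} ≤
        2 * 23 ^ L * #(St n) := by
      have := card_bad_good c L n
      exact_mod_cast this
    have h3 : (#{s ∈ St n | Bad c s ∧ Good L (symmDiff (coords s c) (coords s (!c)))} : ℝ) ≤
        2 * (23 / 24) ^ L * #(St n) := by
      rw [div_pow]
      refine le_of_mul_le_mul_left (h2.trans_eq ?_) (show (0 : ℝ) < 24 ^ L by positivity)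
      field_simp
    refine h3.trans ?_
    gcongr
    linarith
  refine (h1.or (upperFreq_not_good c L (η / 2) (by positivity))).mono (by linarith) ?_
  intro n s _ hbad
  by_cases hg : Good L (symmDiff (coords s c) (coords s (!c)))
  · exact Or.inl ⟨hbad, hg⟩
  · exact Or.inr hg

/-! ### Comparability to self-conjugate partitions -/

theorem ncard_partitions (n : ℕ) : {μ : ℕ → ℕ | IsPartitionOf n μ}.ncard = #(Par n) :=
  Set.ncard_eq_toFinset_card _ (finite_partitions n)

theorem ncard_comparable_le (ε : ℝ) (hε : 0 < ε) : ∃ N : ℕ, ∀ n : ℕ, N ≤ n → ∀ l : ℕ → ℕ,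
    IsPartitionOf n l → conjugate l = l →
    (Set.ncard {μ : ℕ → ℕ | IsPartitionOf n μ ∧ (DominatedBy μ l ∨ DominatedBy l μ)} : ℝ) ≤
      ε * (Set.ncard {μ : ℕ → ℕ | IsPartitionOf n μ} : ℝ) := by
  have h1 := (upperFreq_bad true).or (upperFreq_bad false)
  obtain ⟨N, hN⟩ := Filter.eventually_atTop.1 (h1 ε hε)
  refine ⟨N, fun n hn l hl hc => ?_⟩
  have h2 := hN n hn
  rw [ncard_partitions, ← card_St]
  have h3 : {μ : ℕ → ℕ | IsPartitionOf n μ ∧ (DominatedBy μ l ∨ DominatedBy l μ)}.ncard ≤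
      {s ∈ (St n : Set State) | Bad true s ∨ Bad false s}.ncard := by
    apply Set.ncard_le_ncard_of_injOn (ofPart n)
    · rintro μ ⟨hμ, hcomp⟩
      refine ⟨mem_coe.2 (mem_St.2 (isSt_ofPart hμ)), ?_⟩
      exact (comparable_conjugate hl hc hμ hcomp).imp (bad_ofPart hμ).1 (bad_ofPart hμ).2
    · intro μ hμ ν hν h
      exact ofPart_injOn n hμ.1 hν.1 h
  calc (_ : ℝ) ≤ {s ∈ (St n : Set State) | Bad true s ∨ Bad false s}.ncard := by
        exact_mod_cast h3
    _ ≤ (0 + 0 + ε) * #(St n) := h2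
    _ = _ := by ring

theorem isPartitionOf_staircase (m : ℕ) : IsPartitionOf (m * (m + 1) / 2) (staircase m) := by
  have hsum : ∀ m : ℕ, (∑ i ∈ range m, (m - i)) * 2 = m * (m + 1) := by
    intro m
    induction m with
    | zero => simp
    | succ m ih =>
      rw [sum_range_succ']
      simp only [Nat.add_sub_add_right, Nat.sub_zero, add_mul, ih]
      ring
  apply isPartitionOf_of_sum (N := m)
  · intro i j hij
    unfold staircase; omega
  · intro i hi
    unfold staircase; omega
  · unfold staircase
    have := hsum m
    omega

theorem conjugate_staircase (m : ℕ) : conjugate (staircase m) = staircase m := by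
  apply conjugate_eq_of
  intro i j
  unfold staircase
  omega

/-- the proportion of partitions of `n` comparable to a self-conjugate
partition of `n` tends to zero; in particular `|C(ρ_m)| / p(m(m+1)/2) → 0`. -/
theorem stmt4 :
    (∀ ε : ℝ, 0 < ε → ∃ N : ℕ, ∀ n : ℕ, N ≤ n → ∀ l : ℕ → ℕ,
      IsPartitionOf n l → conjugate l = l →
      (Set.ncard {μ : ℕ → ℕ | IsPartitionOf n μ ∧
          (DominatedBy μ l ∨ DominatedBy l μ)} : ℝ) ≤
        ε * (Set.ncard {μ : ℕ → ℕ | IsPartitionOf n μ} : ℝ)) ∧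
    Filter.Tendsto (fun m : ℕ =>
      (Set.ncard {μ : ℕ → ℕ | IsPartitionOf (m * (m + 1) / 2) μ ∧
        (DominatedBy μ (staircase m) ∨ DominatedBy (staircase m) μ)} : ℝ) /
      (Set.ncard {μ : ℕ → ℕ | IsPartitionOf (m * (m + 1) / 2) μ} : ℝ))
      Filter.atTop (nhds 0) := by
  refine ⟨ncard_comparable_le, ?_⟩
  rw [Metric.tendsto_atTop]
  intro ε hε
  obtain ⟨N, hN⟩ := ncard_comparable_le (ε / 2) (by positivity)
  refine ⟨N, fun m hm => ?_⟩
  have hNm : N ≤ m * (m + 1) / 2 := by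
    rw [Nat.le_div_iff_mul_le (by norm_num)]
    rcases Nat.eq_zero_or_pos m with h | h
    · subst h; omega
    · nlinarith
  have h1 := hN _ hNm _ (isPartitionOf_staircase m) (conjugate_staircase m)
  have h2 : (0 : ℝ) < Set.ncard {μ : ℕ → ℕ | IsPartitionOf (m * (m + 1) / 2) μ} := by
    rw [ncard_partitions]
    exact_mod_cast par_pos _
  rw [Real.dist_0_eq_abs, abs_of_nonneg (by positivity), div_lt_iff₀ h2]
  nlinarith
end
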